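/- Let n and m be multiplicatively independent integers, each at least 2, and let μ be a Borel probability measure on 𝕋 that is invariant and ergodic under the multiplicative semigroup of maps generated by ×n and ×m. If the measure-theoretic entropy h_μ(×n) is positive, then μ is Lebesgue measure on 𝕋. -/

import Mathlib

open MeasureTheory ENNReal

section Entropy

variable {α : Type*} [MeasurableSpace α]

/-- `P : Fin m → Set α` is a finite measurable partition of `α` modulo `μ`-null sets. -/
def IsFinMeasPartition (μ : Measure α) {m : ℕ} (P : Fin m → Set α) : Prop :=
  (∀ i, MeasurableSet (P i)) ∧ Pairwise (Function.onFun Disjoint P) ∧ μ (⋃ i, P i)ᶜ = 0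

/-- Shannon entropy (information) of a finite family of sets with respect to `μ`. -/
noncomputable def finPartitionEntropy (μ : Measure α) {ι : Type*} [Fintype ι]
    (P : ι → Set α) : ℝ≥0∞ :=
  ENNReal.ofReal (∑ i, Real.negMulLog ((μ (P i)).toReal))

/-- The common refinement `P ∨ T⁻¹ P ∨ ⋯ ∨ T^{-(n-1)} P`, indexed by `Fin n → Fin m`. -/
def refinedPartition (T : α → α) {m : ℕ} (P : Fin m → Set α) (n : ℕ) :
    (Fin n → Fin m) → Set α :=
  fun f => ⋂ i : Fin n, T^[(i : ℕ)] ⁻¹' P (f i)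

/-- The measure-theoretic (Kolmogorov–Sinai) entropy `h_μ(T)` of a transformation `T`
preserving `μ`, defined as the supremum over all finite measurable partitions `P` of
`inf_n H_μ(P ∨ T⁻¹P ∨ ⋯ ∨ T^{-n}P)/(n+1)` (by subadditivity this infimum equals the
usual limit). -/
noncomputable def ksEntropy (T : α → α) (μ : Measure α) : ℝ≥0∞ :=
  ⨆ (m : ℕ) (P : Fin m → Set α) (_ : IsFinMeasPartition μ P),
    ⨅ n : ℕ, finPartitionEntropy μ (refinedPartition T P (n + 1)) / (n + 1 : ℝ≥0∞)

end Entropy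

open MeasureTheory

/-!
If almost every `x` is determined by `n • x`, then the first symbol of `x` can be predicted from
sufficiently many digits of `n • x`, and Fano's inequality gives entropy zero. Positive entropy
thus yields non-trivial conditional probabilities on the fibres of `×n`. By multiplicative
independence some powers `m ^ j = g * α` and `n ^ i = g * β` have `α ≠ β`, and they can be chosen
together with some `K ≥ 2` coprime to `α` and `β` such that the conditional probabilities of `×K`
under the images of `μ` by all `g ^ S * K ^ j` are uniformly non-trivial. Conditional
probabilities multiply along iterates, so those of `×K ^ r` are exponentially small in `r` on a
set of mass at least some fixed `c / 2`.

Restrict the image of `μ` by `g ^ S` to such a set. Each map `α ^ s * β ^ (S - s)` pushes that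
image to `μ`, so the average over `s < S` of the pushforwards of the restriction is some `ρ ≤ μ`.
By lifting the exponent the frequencies `ξ * α ^ s * β ^ (S - s)` are distinct modulo `K ^ r` when
`S` is small compared to `K ^ r`; orthogonality of characters on the fibres of `×K ^ r` then makes
the Fourier coefficient of `ρ` at `ξ` small. In the limit `(c / 2) • volume ≤ μ`, and joint
ergodicity of `μ` together with ergodicity of Lebesgue measure forces `μ = volume`.
-/

namespace RudolphJohnson

open Filter Topology

section PeriodicSums

variable {M : Type*} [AddCommMonoid M] {q : ℕ} {F : ℕ → M}

lemma sum_range_succ_arg (h : F q = F 0) :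
    ∑ j ∈ Finset.range q, F (j + 1) = ∑ j ∈ Finset.range q, F j := by
  cases q with
  | zero => simp
  | succ k => rw [Finset.sum_range_succ, Finset.sum_range_succ' (f := F), h]

lemma sum_range_mul_of_periodic (hF : F.Periodic q) (n : ℕ) :
    ∑ k ∈ Finset.range (n * q), F k = n • ∑ j ∈ Finset.range q, F j := by
  induction n with
  | zero => simp
  | succ n ih =>
    have hshift (j : ℕ) : F (n * q + j) = F j := by rw [add_comm]; exact hF.nat_mul n j
    simp only [Nat.succ_mul, Finset.sum_range_add, ih, hshift, succ_nsmul]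

lemma sum_range_mul_arg_of_coprime (hF : F.Periodic q) {a : ℕ} (ha : a.Coprime q) :
    ∑ j ∈ Finset.range q, F (a * j) = ∑ j ∈ Finset.range q, F j := by
  have hinj : Set.InjOn (fun j ↦ a * j % q) (Finset.range q) := by
    intro i hi j hj hij
    rw [Finset.mem_coe, Finset.mem_range] at hi hj
    have hmod : i ≡ j [MOD q] :=
      Nat.ModEq.cancel_left_of_coprime (Nat.coprime_comm.1 ha) hij
    rwa [Nat.ModEq, Nat.mod_eq_of_lt hi, Nat.mod_eq_of_lt hj] at hmod
  have himage : (Finset.range q).image (fun j ↦ a * j % q) = Finset.range q := by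
    refine Finset.eq_of_subset_of_card_le (Finset.image_subset_iff.2 fun j hj ↦ ?_)
      (Finset.card_image_of_injOn hinj).ge
    exact Finset.mem_range.2 (Nat.mod_lt _ (Nat.zero_lt_of_lt (Finset.mem_range.1 hj)))
  calc ∑ j ∈ Finset.range q, F (a * j) = ∑ j ∈ Finset.range q, F (a * j % q) :=
        Finset.sum_congr rfl fun j _ ↦ (hF.map_mod_nat _).symm
    _ = ∑ j ∈ (Finset.range q).image (fun j ↦ a * j % q), F j := (Finset.sum_image hinj).symm
    _ = ∑ j ∈ Finset.range q, F j := by rw [himage]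

end PeriodicSums

section TranslateSum

variable {G : Type*} [AddCommGroup G]

/-- Multiplication by `q`, the map `×q` of the circle, on an arbitrary additive group. -/
abbrev timesMap (q : ℕ) : G → G := fun x ↦ q • x

lemma periodic_apply_nsmul {β : Type*} (f : G → β) {q : ℕ} {t : G} (ht : q • t = 0) :
    (fun j : ℕ ↦ f (j • t)).Periodic q := by
  intro j
  simp only [add_nsmul, ht, add_zero]

variable [MeasurableSpace G]

/-- The sum of the translates of `ν` by `0, t, …, (q - 1) • t`.  When `t` has order `q` this is
`q` times the average of `ν` over the cosets of the subgroup generated by `t`. -/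
noncomputable def translateSum (t : G) (q : ℕ) (ν : Measure G) : Measure G :=
  ∑ j ∈ Finset.range q, ν.map (· + j • t)

variable {t : G} {q : ℕ} {ν : Measure G}

lemma le_translateSum (hq : q ≠ 0) : ν ≤ translateSum t q ν := by
  have h0 : ν.map (· + 0 • t) = ν := by simp
  conv_lhs => rw [← h0]
  exact Finset.single_le_sum (f := fun j : ℕ ↦ ν.map (· + j • t))
    (fun _ _ ↦ Measure.zero_le _) (Finset.mem_range.2 (Nat.pos_of_ne_zero hq))

lemma absolutelyContinuous_translateSum (hq : q ≠ 0) : ν ≪ translateSum t q ν :=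
  Measure.absolutelyContinuous_of_le (le_translateSum hq)

lemma translateSum_nsmul_of_coprime {a : ℕ} (ha : a.Coprime q) (ht : q • t = 0) :
    translateSum (a • t) q ν = translateSum t q ν := by
  have hF := periodic_apply_nsmul (fun s ↦ ν.map (· + s)) ht
  rw [translateSum, translateSum, ← sum_range_mul_arg_of_coprime hF ha]
  simp only [mul_nsmul]

lemma translateSum_mul_of_nsmul_eq_zero {r : ℕ} (ht : r • t = 0) (q : ℕ) :
    translateSum t (q * r) ν = (q : ℝ≥0∞) • translateSum t r ν := by
  have hF := periodic_apply_nsmul (fun s ↦ ν.map (· + s)) ht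
  rw [translateSum, sum_range_mul_of_periodic hF, Nat.cast_smul_eq_nsmul,
    translateSum]

lemma map_timesMap_one (ν : Measure G) : ν.map (timesMap 1) = ν := by
  have h : (timesMap 1 : G → G) = id := funext one_nsmul
  rw [h, Measure.map_id]

variable [MeasurableAdd₂ G]

lemma measurable_timesMap (q : ℕ) : Measurable (timesMap q : G → G) :=
  measurable_const_smul q

lemma map_timesMap_timesMap (a b : ℕ) (ν : Measure G) :
    (ν.map (timesMap a)).map (timesMap b) = ν.map (timesMap (a * b)) := by
  rw [Measure.map_map (measurable_timesMap b) (measurable_timesMap a)]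
  congr 1
  funext x
  exact (mul_nsmul x a b).symm

lemma map_timesMap_mul_of_map_eq {a : ℕ} (ha : ν.map (timesMap a) = ν) (b : ℕ) :
    ν.map (timesMap (a * b)) = ν.map (timesMap b) := by
  rw [← map_timesMap_timesMap, ha]

lemma map_timesMap_pow {a : ℕ} (ha : ν.map (timesMap a) = ν) (k : ℕ) :
    ν.map (timesMap (a ^ k)) = ν := by
  induction k with
  | zero => rw [pow_zero, map_timesMap_one]
  | succ k ih => rw [pow_succ, map_timesMap_mul_of_map_eq ih, ha]

instance (q : ℕ) (ν : Measure G) [IsProbabilityMeasure ν] :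
    IsProbabilityMeasure (ν.map (timesMap q)) :=
  Measure.isProbabilityMeasure_map (measurable_timesMap q).aemeasurable

instance [IsFiniteMeasure ν] : IsFiniteMeasure (translateSum t q ν) := by
  unfold translateSum
  infer_instance

lemma lintegral_translateSum {f : G → ℝ≥0∞} (hf : Measurable f) :
    ∫⁻ x, f x ∂translateSum t q ν = ∑ j ∈ Finset.range q, ∫⁻ x, f (x + j • t) ∂ν := by
  rw [translateSum, lintegral_finsetSum_measure]
  exact Finset.sum_congr rfl fun j _ ↦ lintegral_map hf (measurable_add_const _)

lemma map_add_right_nsmul (hν : ν.map (· + t) = ν) (j : ℕ) : ν.map (· + j • t) = ν := by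
  induction j with
  | zero => simp
  | succ j ih =>
    have hcomp : (· + (j + 1) • t) = (· + t) ∘ (· + j • t) := by
      funext x
      simp [succ_nsmul, add_assoc]
    rw [hcomp, ← Measure.map_map (measurable_add_const _) (measurable_add_const _), ih, hν]

lemma map_add_right_translateSum (ht : q • t = 0) :
    (translateSum t q ν).map (· + t) = translateSum t q ν := by
  have hmap (j : ℕ) : (ν.map (· + j • t)).map (· + t) = ν.map (· + (j + 1) • t) := by
    rw [Measure.map_map (measurable_add_const _) (measurable_add_const _)]
    congr 1
    funext x
    simp [succ_nsmul, add_assoc]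
  rw [translateSum, Measure.map_finset_sum (measurable_add_const _).aemeasurable]
  simp only [hmap]
  exact sum_range_succ_arg (F := fun j ↦ ν.map (· + j • t)) (by simp [ht])

lemma map_timesMap_map_add (a j : ℕ) :
    (ν.map (· + j • t)).map (timesMap a) = (ν.map (timesMap a)).map (· + j • (a • t)) := by
  rw [Measure.map_map (measurable_timesMap a) (measurable_add_const _),
    Measure.map_map (measurable_add_const _) (measurable_timesMap a)]
  congr 1
  funext x
  simp only [Function.comp_apply, nsmul_add, nsmul_left_comm]

lemma map_timesMap_translateSum (a : ℕ) :
    (translateSum t q ν).map (timesMap a) = translateSum (a • t) q (ν.map (timesMap a)) := by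
  rw [translateSum, Measure.map_finset_sum (measurable_timesMap a).aemeasurable]
  exact Finset.sum_congr rfl fun j _ ↦ map_timesMap_map_add a j

end TranslateSum

section Fibres

/-- The point `1 / q` of the circle, which generates the kernel of `×q`. -/
noncomputable def unitFrac (q : ℕ) : UnitAddCircle := ((q : ℝ)⁻¹ : ℝ)

lemma nsmul_unitFrac_mul {q : ℕ} (hq : q ≠ 0) (r : ℕ) : q • unitFrac (q * r) = unitFrac r := by
  have hq' : (q : ℝ) ≠ 0 := Nat.cast_ne_zero.2 hq
  rw [unitFrac, unitFrac, ← AddCircle.coe_nsmul, nsmul_eq_mul, Nat.cast_mul, mul_inv,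
    mul_inv_cancel_left₀ hq']

lemma nsmul_unitFrac {q : ℕ} (hq : q ≠ 0) : q • unitFrac q = 0 := by
  have h := nsmul_unitFrac_mul hq 1
  rw [mul_one] at h
  rw [h, unitFrac, Nat.cast_one, inv_one]
  exact AddCircle.coe_period 1

lemma exists_eq_add_nsmul_unitFrac {q : ℕ} (hq : q ≠ 0) {x y : UnitAddCircle}
    (h : q • x = q • y) : ∃ j < q, x = y + j • unitFrac q := by
  obtain ⟨j, hjq, hj⟩ := (AddCircle.nsmul_eq_zero_iff (u := x - y) (Nat.pos_of_ne_zero hq)).1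
    (by rw [nsmul_sub, h, sub_self])
  refine ⟨j, hjq, ?_⟩
  rw [unitFrac, ← AddCircle.coe_nsmul, nsmul_eq_mul, ← div_eq_mul_inv, ← mul_one ((j : ℝ) / q), hj]
  abel

/-- The representative in `[0, 1)` of a point of the circle. -/
noncomputable def fracPart (x : UnitAddCircle) : ℝ := AddCircle.equivIco 1 0 x

lemma measurable_fracPart : Measurable fracPart :=
  measurable_subtype_coe.comp (AddCircle.measurableEquivIco 1 0).measurable

lemma coe_fracPart (x : UnitAddCircle) : (fracPart x : UnitAddCircle) = x :=
  (AddCircle.equivIco 1 0).symm_apply_apply x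

lemma exists_measurable_rightInverse_timesMap {q : ℕ} (hq : q ≠ 0) :
    ∃ s : UnitAddCircle → UnitAddCircle, Measurable s ∧ Function.RightInverse s (timesMap q) := by
  refine ⟨fun y ↦ (fracPart y / q : ℝ),
    AddCircle.measurable_mk'.comp (measurable_fracPart.div_const _), fun y ↦ ?_⟩
  rw [timesMap, ← AddCircle.coe_nsmul, nsmul_eq_mul, mul_div_cancel₀ _ (Nat.cast_ne_zero.2 hq),
    coe_fracPart]

/-- The sum of the translates of `ν` by the `q`-torsion points of the circle. -/
noncomputable def torsionSum (q : ℕ) (ν : Measure UnitAddCircle) : Measure UnitAddCircle :=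
  translateSum (unitFrac q) q ν

instance (q : ℕ) (ν : Measure UnitAddCircle) [IsFiniteMeasure ν] :
    IsFiniteMeasure (torsionSum q ν) := by
  unfold torsionSum
  infer_instance

variable {q r : ℕ} {ν : Measure UnitAddCircle}

lemma map_timesMap_torsionSum_of_coprime (hq : q ≠ 0) {a : ℕ} (ha : a.Coprime q) :
    (torsionSum q ν).map (timesMap a) = torsionSum q (ν.map (timesMap a)) := by
  rw [torsionSum, map_timesMap_translateSum,
    translateSum_nsmul_of_coprime ha (nsmul_unitFrac hq), torsionSum]

lemma map_timesMap_torsionSum_mul (hq : q ≠ 0) (hr : r ≠ 0) :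
    (torsionSum (q * r) ν).map (timesMap q) = (q : ℝ≥0∞) • torsionSum r (ν.map (timesMap q)) := by
  rw [torsionSum, map_timesMap_translateSum, nsmul_unitFrac_mul hq,
    translateSum_mul_of_nsmul_eq_zero (nsmul_unitFrac hr), torsionSum]

lemma map_timesMap_torsionSum (hq : q ≠ 0) :
    (torsionSum q ν).map (timesMap q) = (q : ℝ≥0∞) • ν.map (timesMap q) := by
  have h := map_timesMap_torsionSum_mul (ν := ν) hq one_ne_zero
  simpa [torsionSum, translateSum] using h

lemma map_add_unitFrac_torsionSum_mul (hq : q ≠ 0) (hr : r ≠ 0) :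
    (torsionSum (q * r) ν).map (· + unitFrac q) = torsionSum (q * r) ν := by
  have h := map_add_right_nsmul (map_add_right_translateSum (ν := ν)
    (nsmul_unitFrac (mul_ne_zero hq hr))) r
  have hfrac : r • unitFrac (q * r) = unitFrac q := by rw [mul_comm, nsmul_unitFrac_mul hr]
  rwa [hfrac] at h

lemma sum_apply_add_nsmul_unitFrac_eq {M : Type*} [AddCommMonoid M] (hq : q ≠ 0)
    (f : UnitAddCircle → M) {x y : UnitAddCircle} (h : q • x = q • y) :
    ∑ j ∈ Finset.range q, f (x + j • unitFrac q)
      = ∑ j ∈ Finset.range q, f (y + j • unitFrac q) := by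
  obtain ⟨k, -, rfl⟩ := exists_eq_add_nsmul_unitFrac hq h
  clear h
  induction k with
  | zero => simp
  | succ k ih =>
    rw [← ih, ← sum_range_succ_arg (F := fun j ↦ f (y + k • unitFrac q + j • unitFrac q))
      (by simp [nsmul_unitFrac hq])]
    refine Finset.sum_congr rfl fun j _ ↦ ?_
    congr 1
    simp only [succ_nsmul]
    abel

lemma mul_lintegral_of_map_add_unitFrac (hq : q ≠ 0) (hν : ν.map (· + unitFrac q) = ν)
    {s : UnitAddCircle → UnitAddCircle} (hs : Measurable s)
    (hsq : Function.RightInverse s (timesMap q)) {f : UnitAddCircle → ℝ≥0∞} (hf : Measurable f) :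
    q * ∫⁻ x, f x ∂ν
      = ∫⁻ y, ∑ j ∈ Finset.range q, f (s y + j • unitFrac q) ∂(ν.map (timesMap q)) := by
  have hadd (j : ℕ) : Measurable fun x ↦ f (x + j • unitFrac q) :=
    hf.comp (measurable_add_const _)
  have hsum : Measurable fun y ↦ ∑ j ∈ Finset.range q, f (s y + j • unitFrac q) :=
    Finset.measurable_sum _ fun j _ ↦ (hadd j).comp hs
  rw [lintegral_map hsum (measurable_timesMap q)]
  calc q * ∫⁻ x, f x ∂ν = ∑ j ∈ Finset.range q, ∫⁻ x, f (x + j • unitFrac q) ∂ν := by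
        have hterm (j : ℕ) : ∫⁻ x, f (x + j • unitFrac q) ∂ν = ∫⁻ x, f x ∂ν := by
          conv_rhs => rw [← map_add_right_nsmul hν j, lintegral_map hf (measurable_add_const _)]
        simp [hterm]
    _ = ∫⁻ x, ∑ j ∈ Finset.range q, f (x + j • unitFrac q) ∂ν :=
        (lintegral_finsetSum _ fun j _ ↦ hadd j).symm
    _ = _ := lintegral_congr fun x ↦ sum_apply_add_nsmul_unitFrac_eq hq f (hsq (q • x)).symm

lemma eq_of_map_timesMap_eq {ν₁ ν₂ : Measure UnitAddCircle} (hq : q ≠ 0)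
    (h₁ : ν₁.map (· + unitFrac q) = ν₁) (h₂ : ν₂.map (· + unitFrac q) = ν₂)
    (h : ν₁.map (timesMap q) = ν₂.map (timesMap q)) : ν₁ = ν₂ := by
  obtain ⟨s, hs, hsq⟩ := exists_measurable_rightInverse_timesMap hq
  refine Measure.ext_of_lintegral _ fun f hf ↦ ?_
  have hmul : (q : ℝ≥0∞) * ∫⁻ x, f x ∂ν₁ = q * ∫⁻ x, f x ∂ν₂ := by
    rw [mul_lintegral_of_map_add_unitFrac hq h₁ hs hsq hf, h,
      mul_lintegral_of_map_add_unitFrac hq h₂ hs hsq hf]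
  exact (ENNReal.mul_right_inj (Nat.cast_ne_zero.2 hq) (ENNReal.natCast_ne_top q)).1 hmul

/-- The conditional probability under `ν` of a point given its image under `×q`: the density of
`ν` with respect to the sum of its translates by the `q`-torsion. -/
noncomputable def fiberProb (q : ℕ) (ν : Measure UnitAddCircle) : UnitAddCircle → ℝ≥0∞ :=
  ν.rnDeriv (torsionSum q ν)

lemma measurable_fiberProb (q : ℕ) (ν : Measure UnitAddCircle) : Measurable (fiberProb q ν) :=
  Measure.measurable_rnDeriv _ _

lemma fiberProb_le_one (hq : q ≠ 0) [IsFiniteMeasure ν] : ∀ᵐ x ∂ν, fiberProb q ν x ≤ 1 :=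
  (absolutelyContinuous_translateSum hq).ae_le
    (Measure.rnDeriv_le_one_of_le (le_translateSum hq))

lemma withDensity_fiberProb (hq : q ≠ 0) (ν : Measure UnitAddCircle) [IsFiniteMeasure ν] :
    (torsionSum q ν).withDensity (fiberProb q ν) = ν :=
  have := Measure.haveLebesgueDecomposition_of_sigmaFinite ν (torsionSum q ν)
  Measure.withDensity_rnDeriv_eq ν (torsionSum q ν) (absolutelyContinuous_translateSum hq)

lemma lintegral_eq_lintegral_fiberProb_mul (hq : q ≠ 0) [IsFiniteMeasure ν]
    {f : UnitAddCircle → ℝ≥0∞} (hf : Measurable f) :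
    ∫⁻ x, f x ∂ν = ∫⁻ x, fiberProb q ν x * f x ∂torsionSum q ν := by
  conv_lhs => rw [← withDensity_fiberProb hq ν]
  exact lintegral_withDensity_eq_lintegral_mul _ (measurable_fiberProb q ν) hf

lemma map_withDensity_comp {α β : Type*} [MeasurableSpace α] [MeasurableSpace β] {μ : Measure α}
    {T : α → β} (hT : Measurable T) {g : β → ℝ≥0∞} (hg : Measurable g) :
    (μ.withDensity (g ∘ T)).map T = (μ.map T).withDensity g := by
  ext s hs
  rw [Measure.map_apply hT hs, withDensity_apply _ (hT hs), withDensity_apply _ hs,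
    setLIntegral_map hs hg hT]
  rfl

lemma withDensity_fiberProb_comp_timesMap (hq : q ≠ 0) (hr : r ≠ 0) [IsFiniteMeasure ν] :
    (torsionSum (q * r) ν).withDensity (fiberProb r (ν.map (timesMap q)) ∘ timesMap q)
      = torsionSum q ν := by
  have hmeas := measurable_fiberProb r (ν.map (timesMap q))
  refine eq_of_map_timesMap_eq hq ?_ (map_add_right_translateSum (nsmul_unitFrac hq)) ?_
  · have hperiod : fiberProb r (ν.map (timesMap q)) ∘ timesMap q
        = (fiberProb r (ν.map (timesMap q)) ∘ timesMap q) ∘ (· + unitFrac q) := by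
      funext x
      simp [nsmul_unitFrac hq]
    conv_lhs => rw [hperiod]
    rw [map_withDensity_comp (measurable_add_const _) (hmeas.comp (measurable_timesMap q)),
      map_add_unitFrac_torsionSum_mul hq hr]
  · rw [map_withDensity_comp (measurable_timesMap q) hmeas, map_timesMap_torsionSum_mul hq hr,
      withDensity_smul_measure, withDensity_fiberProb hr, map_timesMap_torsionSum hq]

lemma fiberProb_mul (hq : q ≠ 0) (hr : r ≠ 0) [IsFiniteMeasure ν] :
    ∀ᵐ x ∂ν, fiberProb (q * r) ν x
      = fiberProb q ν x * fiberProb r (ν.map (timesMap q)) (q • x) := by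
  have hcomp : Measurable (fiberProb r (ν.map (timesMap q)) ∘ timesMap q) :=
    (measurable_fiberProb _ _).comp (measurable_timesMap q)
  have hdensity : (torsionSum (q * r) ν).withDensity
      ((fiberProb r (ν.map (timesMap q)) ∘ timesMap q) * fiberProb q ν) = ν := by
    rw [withDensity_mul _ hcomp (measurable_fiberProb q ν),
      withDensity_fiberProb_comp_timesMap hq hr, withDensity_fiberProb hq]
  have hderiv := Measure.rnDeriv_withDensity (torsionSum (q * r) ν)
    (hcomp.mul (measurable_fiberProb q ν))
  rw [hdensity] at hderiv
  filter_upwards [(absolutelyContinuous_translateSum (mul_ne_zero hq hr)).ae_le hderiv] with x hx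
  rw [fiberProb, hx, Pi.mul_apply, mul_comm, Function.comp_apply]

end Fibres

section CollisionProb

variable {q r : ℕ} {ν : Measure UnitAddCircle}

lemma ae_map_timesMap {p : UnitAddCircle → Prop} (hp : MeasurableSet {x | p x}) :
    (∀ᵐ x ∂ν.map (timesMap q), p x) ↔ ∀ᵐ x ∂ν, p (q • x) :=
  ae_map_iff (measurable_timesMap q).aemeasurable hp

/-- `×q` is essentially injective for `ν`: almost every point is determined by its image. -/
def EssInjective (q : ℕ) (ν : Measure UnitAddCircle) : Prop :=
  ∀ᵐ x ∂ν, fiberProb q ν x = 1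

lemma essInjective_one [SigmaFinite ν] : EssInjective 1 ν := by
  have h : torsionSum 1 ν = ν := by simp [torsionSum, translateSum]
  rw [EssInjective, fiberProb, h]
  exact Measure.rnDeriv_self ν

lemma essInjective_map_timesMap :
    EssInjective r (ν.map (timesMap q)) ↔
      ∀ᵐ x ∂ν, fiberProb r (ν.map (timesMap q)) (q • x) = 1 :=
  ae_map_timesMap (measurableSet_eq_fun (measurable_fiberProb _ _) measurable_const)

lemma essInjective_mul_iff (hq : q ≠ 0) (hr : r ≠ 0) [IsFiniteMeasure ν] :
    EssInjective (q * r) ν ↔ EssInjective q ν ∧ EssInjective r (ν.map (timesMap q)) := by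
  have hq1 := fiberProb_le_one (ν := ν) hq
  have hr1 : ∀ᵐ x ∂ν, fiberProb r (ν.map (timesMap q)) (q • x) ≤ 1 :=
    (ae_map_timesMap (measurableSet_le (measurable_fiberProb _ _) measurable_const)).1
      (fiberProb_le_one hr)
  rw [essInjective_map_timesMap]
  refine ⟨fun h ↦ ⟨?_, ?_⟩, fun ⟨hxq, hxr⟩ ↦ ?_⟩
  · filter_upwards [h, hq1, hr1, fiberProb_mul hq hr] with x hx hxq hxr hmul
    exact le_antisymm hxq (hx.symm.trans_le (hmul.trans_le (mul_le_of_le_one_right' hxr)))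
  · filter_upwards [h, hq1, hr1, fiberProb_mul hq hr] with x hx hxq hxr hmul
    exact le_antisymm hxr (hx.symm.trans_le (hmul.trans_le (mul_le_of_le_one_left' hxq)))
  · filter_upwards [hxq, hxr, fiberProb_mul hq hr] with x hq hr hmul
    rw [hmul, hq, hr, one_mul]

/-- The probability that two points drawn from `ν`, independently conditionally on having the same
image under `×q`, coincide. -/
noncomputable def collisionProb (q : ℕ) (ν : Measure UnitAddCircle) : ℝ≥0∞ :=
  ∫⁻ x, fiberProb q ν x ∂ν

lemma collisionProb_le_one (hq : q ≠ 0) [IsProbabilityMeasure ν] : collisionProb q ν ≤ 1 :=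
  (lintegral_mono_ae (fiberProb_le_one hq)).trans_eq (by simp)

lemma essInjective_of_collisionProb_eq_one (hq : q ≠ 0) [IsProbabilityMeasure ν]
    (h : collisionProb q ν = 1) : EssInjective q ν :=
  ae_eq_of_ae_le_of_lintegral_le (fiberProb_le_one hq) (h.trans_ne one_ne_top)
    aemeasurable_const ((lintegral_one.trans measure_univ).trans_le h.ge)

lemma collisionProb_lt_one (hq : q ≠ 0) [IsProbabilityMeasure ν] (h : ¬ EssInjective q ν) :
    collisionProb q ν < 1 :=
  (collisionProb_le_one hq).lt_of_ne fun h1 ↦ h (essInjective_of_collisionProb_eq_one hq h1)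

lemma ennreal_mul_add_mul_le_sq_add_sq (a b : ℝ≥0∞) : a * b + a * b ≤ a ^ 2 + b ^ 2 := by
  wlog hab : a ≤ b generalizing a b
  · rw [mul_comm, add_comm (a ^ 2)]
    exact this b a (le_of_not_ge hab)
  obtain ⟨c, rfl⟩ := exists_add_of_le hab
  calc a * (a + c) + a * (a + c) ≤ a * (a + c) + a * (a + c) + c ^ 2 := le_self_add
    _ = a ^ 2 + (a + c) ^ 2 := by ring

lemma collisionProb_eq_lintegral_sq (hq : q ≠ 0) [IsFiniteMeasure ν] :
    collisionProb q ν = ∫⁻ x, fiberProb q ν x ^ 2 ∂torsionSum q ν := by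
  rw [collisionProb, lintegral_eq_lintegral_fiberProb_mul hq (measurable_fiberProb q ν)]
  simp only [sq]

lemma collisionProb_map_timesMap_le (hq : q ≠ 0) {a : ℕ} (ha : a.Coprime q)
    [IsProbabilityMeasure ν] : collisionProb q (ν.map (timesMap a)) ≤ collisionProb q ν := by
  set g := fiberProb q ν
  set g' := fiberProb q (ν.map (timesMap a))
  have hg : Measurable g := measurable_fiberProb _ _
  have hg' : Measurable g' := measurable_fiberProb _ _
  have hg'a : Measurable fun x ↦ g' (a • x) := hg'.comp (measurable_timesMap a)
  have hgg' : Measurable fun x ↦ g x * g' (a • x) := hg.mul hg'a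
  have hcross : collisionProb q (ν.map (timesMap a)) = ∫⁻ x, g x * g' (a • x) ∂torsionSum q ν := by
    rw [collisionProb, lintegral_map hg' (measurable_timesMap a),
      lintegral_eq_lintegral_fiberProb_mul hq hg'a]
  have hsq' : collisionProb q (ν.map (timesMap a)) = ∫⁻ x, g' (a • x) ^ 2 ∂torsionSum q ν := by
    rw [collisionProb_eq_lintegral_sq hq, ← map_timesMap_torsionSum_of_coprime hq ha,
      lintegral_map (hg'.pow_const 2) (measurable_timesMap a)]
  have hfinite : collisionProb q (ν.map (timesMap a)) ≠ ∞ :=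
    ((collisionProb_le_one hq).trans_lt one_lt_top).ne
  refine (ENNReal.add_le_add_iff_left hfinite).1 ?_
  calc collisionProb q (ν.map (timesMap a)) + collisionProb q (ν.map (timesMap a))
      = ∫⁻ x, g x * g' (a • x) + g x * g' (a • x) ∂torsionSum q ν := by
        rw [lintegral_add_left hgg', ← hcross]
    _ ≤ ∫⁻ x, g x ^ 2 + g' (a • x) ^ 2 ∂torsionSum q ν :=
        lintegral_mono fun x ↦ ennreal_mul_add_mul_le_sq_add_sq _ _
    _ = collisionProb q (ν.map (timesMap a)) + collisionProb q ν := by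
        rw [lintegral_add_left (hg.pow_const 2), ← collisionProb_eq_lintegral_sq hq, ← hsq',
          add_comm]

lemma collisionProb_map_timesMap_of_essInjective (hq : q ≠ 0) (hr : r ≠ 0) [IsFiniteMeasure ν]
    (h : EssInjective r ν) (hmap : EssInjective r (ν.map (timesMap q))) :
    collisionProb q (ν.map (timesMap r)) = collisionProb q ν := by
  calc collisionProb q (ν.map (timesMap r)) = collisionProb (r * q) ν := by
        rw [collisionProb, lintegral_map (measurable_fiberProb _ _) (measurable_timesMap r)]
        refine lintegral_congr_ae ?_
        filter_upwards [h, fiberProb_mul hr hq] with x hx hmul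
        rw [hmul, hx, one_mul]
    _ = collisionProb (q * r) ν := by rw [mul_comm]
    _ = collisionProb q ν := by
        refine lintegral_congr_ae ?_
        filter_upwards [essInjective_map_timesMap.1 hmap, fiberProb_mul hq hr] with x hx hmul
        rw [hmul, hx, mul_one]

lemma fiberProb_pow (hq : q ≠ 0) [IsFiniteMeasure ν] (r : ℕ) :
    ∀ᵐ x ∂ν, fiberProb (q ^ r) ν x
      = ∏ j ∈ Finset.range r, fiberProb q (ν.map (timesMap (q ^ j))) (q ^ j • x) := by
  induction r with
  | zero => simpa [EssInjective] using essInjective_one (ν := ν)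
  | succ r ih =>
    filter_upwards [ih, fiberProb_mul (pow_ne_zero r hq) hq (ν := ν)] with x hx hmul
    rw [Finset.prod_range_succ, ← hx, ← hmul, pow_succ]

end CollisionProb

section StablyInjective

/-- `×d` is essentially injective for the images of `μ` under all multiplications by integers
whose prime factors lie in `s`. -/
def StablyInjective (s : Finset ℕ) (μ : Measure UnitAddCircle) (d : ℕ) : Prop :=
  ∀ u ∈ Nat.factoredNumbers s, EssInjective d (μ.map (timesMap u))

lemma one_mem_factoredNumbers (s : Finset ℕ) : 1 ∈ Nat.factoredNumbers s := by
  simp [Nat.mem_factoredNumbers]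

lemma pow_mem_factoredNumbers {s : Finset ℕ} {a : ℕ} (ha : a ∈ Nat.factoredNumbers s) (k : ℕ) :
    a ^ k ∈ Nat.factoredNumbers s := by
  induction k with
  | zero => exact one_mem_factoredNumbers s
  | succ k ih => exact Nat.mul_mem_factoredNumbers ih ha

variable {s : Finset ℕ} {μ : Measure UnitAddCircle} {d e : ℕ}

namespace StablyInjective

lemma essInjective (h : StablyInjective s μ d) : EssInjective d μ := by
  simpa [map_timesMap_one] using h 1 (one_mem_factoredNumbers s)

lemma one [IsFiniteMeasure μ] : StablyInjective s μ 1 := fun _ _ ↦ essInjective_one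

lemma mul [IsFiniteMeasure μ] (hds : d ∈ Nat.factoredNumbers s) (he0 : e ≠ 0)
    (hd : StablyInjective s μ d) (he : StablyInjective s μ e) : StablyInjective s μ (d * e) := by
  intro u hu
  rw [essInjective_mul_iff (Nat.ne_zero_of_mem_factoredNumbers hds) he0, map_timesMap_timesMap]
  exact ⟨hd u hu, he _ (Nat.mul_mem_factoredNumbers hu hds)⟩

lemma pow [IsFiniteMeasure μ] (hds : d ∈ Nat.factoredNumbers s) (hd : StablyInjective s μ d)
    (k : ℕ) : StablyInjective s μ (d ^ k) := by
  induction k with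
  | zero => exact one
  | succ k ih =>
    exact mul (pow_mem_factoredNumbers hds k) (Nat.ne_zero_of_mem_factoredNumbers hds) ih hd

lemma of_primes [IsFiniteMeasure μ] (hds : d ∈ Nat.factoredNumbers s)
    (h : ∀ p, p.Prime → p ∣ d → StablyInjective s μ p) : StablyInjective s μ d := by
  induction d using Nat.recOnMul with
  | zero => exact absurd rfl (Nat.ne_zero_of_mem_factoredNumbers hds)
  | one => exact one
  | prime p hp => exact h p hp dvd_rfl
  | mul a b iha ihb =>
    have ha := Nat.mem_factoredNumbers_of_dvd hds (dvd_mul_right a b)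
    have hb := Nat.mem_factoredNumbers_of_dvd hds (dvd_mul_left b a)
    exact mul ha (Nat.ne_zero_of_mem_factoredNumbers hb)
      (iha ha fun p hp hpa ↦ h p hp (hpa.mul_right b))
      (ihb hb fun p hp hpb ↦ h p hp (hpb.mul_left a))

lemma collisionProb_map [IsFiniteMeasure μ] {K u : ℕ} (hd : StablyInjective s μ d) (hd0 : d ≠ 0)
    (hK : K ∈ Nat.factoredNumbers s) (hu : u ∈ Nat.factoredNumbers s) :
    collisionProb K (μ.map (timesMap (u * d))) = collisionProb K (μ.map (timesMap u)) := by
  rw [← map_timesMap_timesMap]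
  refine collisionProb_map_timesMap_of_essInjective (Nat.ne_zero_of_mem_factoredNumbers hK) hd0
    (hd u hu) ?_
  rw [map_timesMap_timesMap]
  exact hd _ (Nat.mul_mem_factoredNumbers hu hK)

end StablyInjective

end StablyInjective

section LiftingTheExponent

lemma emultiplicity_pow_sub_pow_of_prime {p : ℕ} (hp : p.Prime) {x y : ℤ} (hxy : (p : ℤ) ∣ x - y)
    (hx : ¬ (p : ℤ) ∣ x) (h4 : p = 2 → 4 ∣ x - y) (N : ℕ) :
    emultiplicity (p : ℤ) (x ^ N - y ^ N)
      = emultiplicity (p : ℤ) (x - y) + emultiplicity (p : ℤ) (N : ℤ) := by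
  rcases hp.eq_two_or_odd' with rfl | hodd
  · exact Int.two_pow_sub_pow' N (h4 rfl) hx
  · rw [Int.emultiplicity_pow_sub_pow hp hodd hxy hx N, Int.natCast_emultiplicity]

lemma dvd_mul_sub_mul_of_dvd_mul_pow_sub_pow {M : ℕ} {x y ξ : ℤ} {N : ℕ}
    (h : ∀ p : ℕ, p.Prime → p ∣ M → (p : ℤ) ∣ x - y ∧ ¬ (p : ℤ) ∣ x ∧ (p = 2 → 4 ∣ x - y))
    (hM : (M : ℤ) ∣ ξ * (x ^ N - y ^ N)) : (M : ℤ) ∣ ξ * (x - y) * N := by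
  rw [← Int.natAbs_dvd_natAbs, Int.natAbs_natCast, Nat.dvd_iff_prime_pow_dvd_dvd]
  intro p k hp hpk
  rcases Nat.eq_zero_or_pos k with rfl | hk
  · exact one_dvd _
  obtain ⟨hxy, hx, h4⟩ := h p hp ((dvd_pow_self p hk.ne').trans hpk)
  have hpp : Prime (p : ℤ) := Nat.prime_iff_prime_int.1 hp
  have hdvd : (p : ℤ) ^ k ∣ ξ * (x ^ N - y ^ N) :=
    (by exact_mod_cast hpk : (p : ℤ) ^ k ∣ M).trans hM
  rw [pow_dvd_iff_le_emultiplicity, emultiplicity_mul hpp,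
    emultiplicity_pow_sub_pow_of_prime hp hxy hx h4, ← add_assoc, ← emultiplicity_mul hpp,
    ← emultiplicity_mul hpp, ← pow_dvd_iff_le_emultiplicity] at hdvd
  rw [← Int.natCast_dvd]
  exact_mod_cast hdvd

lemma dvd_pow_two_mul_totient_sub_one {γ K : ℕ} (hγ : γ.Coprime K) :
    (K : ℤ) ∣ (γ : ℤ) ^ (2 * K.totient) - 1 := by
  have h := ((Nat.ModEq.pow_totient hγ).pow 2).symm
  rw [one_pow, ← pow_mul, mul_comm, Nat.modEq_iff_dvd] at h
  exact_mod_cast h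

lemma four_dvd_pow_two_mul_sub_one {γ : ℕ} (hγ : Odd γ) (e : ℕ) :
    (4 : ℤ) ∣ (γ : ℤ) ^ (2 * e) - 1 := by
  have hodd : Odd ((γ : ℤ) ^ e) := ((Int.odd_coe_nat γ).2 hγ).pow
  rw [mul_comm, pow_mul]
  exact Int.ModEq.dvd (Int.sq_mod_four_eq_one_of_odd hodd).symm

lemma exists_pow_dvd_of_pow_dvd_mul_pow_sub_pow {K α β : ℕ} (hK : K ≠ 0) (hα : α.Coprime K)
    (hβ : β.Coprime K) (hαβ : α ≠ β) :
    ∃ D : ℕ, D ≠ 0 ∧ ∀ (r N : ℕ) (ξ : ℤ), (K : ℤ) ^ r ∣ ξ * ((α : ℤ) ^ N - (β : ℤ) ^ N) →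
      (K : ℤ) ^ r ∣ ξ * D * N := by
  set e := 2 * K.totient
  have he : e ≠ 0 := mul_ne_zero two_ne_zero (Nat.totient_pos.2 (Nat.pos_of_ne_zero hK)).ne'
  set x : ℤ := (α : ℤ) ^ e
  set y : ℤ := (β : ℤ) ^ e
  have hxy : x ≠ y := fun h ↦
    hαβ (Nat.pow_left_injective he (Nat.cast_injective (R := ℤ) (by push_cast; exact h)))
  have hdvd_sub (d : ℤ) (hx : d ∣ x - 1) (hy : d ∣ y - 1) : d ∣ x - y := by
    simpa using dvd_sub hx hy
  have hKxy : (K : ℤ) ∣ x - y :=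
    hdvd_sub K (dvd_pow_two_mul_totient_sub_one hα) (dvd_pow_two_mul_totient_sub_one hβ)
  refine ⟨(x - y).natAbs, Int.natAbs_ne_zero.2 (sub_ne_zero.2 hxy), fun r N ξ h ↦ ?_⟩
  have hpow : ((K ^ r : ℕ) : ℤ) ∣ ξ * (x ^ N - y ^ N) := by
    rw [pow_right_comm (α : ℤ), pow_right_comm (β : ℤ), Nat.cast_pow]
    exact h.trans (mul_dvd_mul_left ξ (sub_dvd_pow_sub_pow _ _ e))
  suffices (K : ℤ) ^ r ∣ ξ * (x - y) * N by
    rw [← Int.natAbs_dvd_natAbs] at this ⊢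
    simpa only [Int.natAbs_mul, Int.natAbs_natCast] using this
  rw [← Nat.cast_pow]
  refine dvd_mul_sub_mul_of_dvd_mul_pow_sub_pow (fun p hp hpKr ↦ ?_) hpow
  have hpK : p ∣ K := hp.dvd_of_dvd_pow hpKr
  refine ⟨(Int.natCast_dvd_natCast.2 hpK).trans hKxy, fun hpx ↦ ?_, ?_⟩
  · have hpα : p ∣ α := hp.dvd_of_dvd_pow (Int.natCast_dvd_natCast.1 (by push_cast; exact hpx))
    exact hp.ne_one (Nat.eq_one_of_dvd_coprimes hα hpα hpK)
  · rintro rfl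
    have hodd {γ : ℕ} (hγ : γ.Coprime K) : Odd γ :=
      Nat.Coprime.odd_of_left (hγ.coprime_dvd_right hpK).symm
    exact hdvd_sub 4 (four_dvd_pow_two_mul_sub_one (hodd hα) _)
      (four_dvd_pow_two_mul_sub_one (hodd hβ) _)

lemma exists_pow_not_dvd_mul_sub {K α β : ℕ} (hK : K ≠ 0) (hα : α.Coprime K) (hβ : β.Coprime K)
    (hαβ : α ≠ β) :
    ∃ D : ℕ, D ≠ 0 ∧ ∀ (r S : ℕ) (ξ : ℤ), ξ ≠ 0 → D * ξ.natAbs * S ≤ K ^ r →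
      ∀ s < S, ∀ t < S, s ≠ t → ¬ ((K ^ r : ℕ) : ℤ) ∣
        ξ * (α ^ s * β ^ (S - s) : ℕ) - ξ * (α ^ t * β ^ (S - t) : ℕ) := by
  obtain ⟨D, hD, hdvd⟩ := exists_pow_dvd_of_pow_dvd_mul_pow_sub_pow hK hα hβ hαβ
  refine ⟨D, hD, fun r S ξ hξ hS s hs t ht hst h ↦ ?_⟩
  wlog hlt : s < t generalizing s t
  · exact this t ht s hs hst.symm (by rwa [← dvd_neg, neg_sub]) (by omega)
  obtain ⟨N, rfl⟩ := Nat.exists_eq_add_of_le hlt.le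
  have hfactor : ξ * (α ^ s * β ^ (S - s) : ℕ) - ξ * (α ^ (s + N) * β ^ (S - (s + N)) : ℕ)
      = -((α ^ s * β ^ (S - (s + N)) : ℕ) * (ξ * ((α : ℤ) ^ N - (β : ℤ) ^ N))) := by
    have hexp : S - s = S - (s + N) + N := by omega
    push_cast
    rw [hexp, pow_add, pow_add]
    ring
  have hcoprime : IsCoprime ((K ^ r : ℕ) : ℤ) (α ^ s * β ^ (S - (s + N)) : ℕ) :=
    Nat.isCoprime_iff_coprime.2
      (((hα.pow_left _).mul_left (hβ.pow_left _)).pow_right r).symm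
  rw [hfactor, dvd_neg] at h
  have hKN : (K : ℤ) ^ r ∣ ξ * D * N :=
    hdvd r N ξ (by exact_mod_cast hcoprime.dvd_of_dvd_mul_left h)
  have hξD : 0 < D * ξ.natAbs := Nat.mul_pos (Nat.pos_of_ne_zero hD) (Int.natAbs_pos.2 hξ)
  have hle : K ^ r ≤ D * ξ.natAbs * N := by
    refine Nat.le_of_dvd (Nat.mul_pos hξD (by omega)) ?_
    have hnat := Int.natAbs_dvd_natAbs.2 hKN
    simpa only [Int.natAbs_mul, Int.natAbs_pow, Int.natAbs_natCast, mul_comm D] using hnat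
  exact absurd (hS.trans hle) (not_le.2 (Nat.mul_lt_mul_of_pos_left (by omega) hξD))

end LiftingTheExponent

section SmallFiberProb

lemma integral_le_add_mul_measureReal {Ω : Type*} [MeasurableSpace Ω] {μ : Measure Ω}
    [IsProbabilityMeasure μ] {X : Ω → ℝ} (hX : Measurable X) (hint : Integrable X μ) {b B : ℝ}
    (hb : 0 ≤ b) (hXB : ∀ᵐ x ∂μ, X x ≤ B) : ∫ x, X x ∂μ ≤ b + B * μ.real {x | b ≤ X x} := by
  set A := {x | b ≤ X x}
  have hA : MeasurableSet A := measurableSet_le measurable_const hX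
  have hind : Integrable (A.indicator fun _ ↦ B) μ := (integrable_const B).indicator hA
  calc ∫ x, X x ∂μ ≤ ∫ x, b + A.indicator (fun _ ↦ B) x ∂μ := by
        refine integral_mono_ae hint ((integrable_const b).add hind) ?_
        filter_upwards [hXB] with x hx
        by_cases hxA : x ∈ A
        · simpa [hxA] using hx.trans (le_add_of_nonneg_left hb)
        · simpa [hxA] using (not_le.1 hxA).le
    _ = b + B * μ.real A := by
        rw [integral_add (integrable_const b) hind, integral_indicator_const _ hA]
        simp [mul_comm]

lemma prod_le_exp_neg_sum_one_sub {ι : Type*} (s : Finset ι) {f : ι → ℝ} (hf : ∀ i ∈ s, 0 ≤ f i) :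
    ∏ i ∈ s, f i ≤ Real.exp (-∑ i ∈ s, (1 - f i)) := by
  rw [← Finset.sum_neg_distrib, Real.exp_sum]
  refine Finset.prod_le_prod hf fun i _ ↦ ?_
  linarith [Real.add_one_le_exp (-(1 - f i))]

lemma half_le_measureReal_prod_le_exp {Ω : Type*} [MeasurableSpace Ω] {μ : Measure Ω}
    [IsProbabilityMeasure μ] {f : ℕ → Ω → ℝ} (hf : ∀ j, Measurable (f j))
    (hf0 : ∀ j x, 0 ≤ f j x) (hf1 : ∀ᵐ x ∂μ, ∀ j, f j x ≤ 1) {c : ℝ} (hc : 0 ≤ c)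
    (hfc : ∀ j, ∫ x, f j x ∂μ ≤ 1 - c) {r : ℕ} (hr : r ≠ 0) :
    c / 2 ≤ μ.real {x | ∏ j ∈ Finset.range r, f j x ≤ Real.exp (-(c * r / 2))} := by
  have hint (j : ℕ) : Integrable (f j) μ := by
    refine Integrable.of_bound (C := 1) (hf j).aestronglyMeasurable ?_
    filter_upwards [hf1] with x hx
    rw [Real.norm_of_nonneg (hf0 j x)]
    exact hx j
  have hint' (j : ℕ) : Integrable (fun x ↦ 1 - f j x) μ := (integrable_const 1).sub (hint j)
  set X : Ω → ℝ := fun x ↦ ∑ j ∈ Finset.range r, (1 - f j x)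
  have hlower : c * r ≤ ∫ x, X x ∂μ := by
    have hterm (j : ℕ) : c ≤ ∫ x, (1 - f j x) ∂μ := by
      rw [integral_sub (integrable_const 1) (hint j), integral_const, probReal_univ, one_smul]
      linarith [hfc j]
    rw [integral_finsetSum _ fun j _ ↦ hint' j]
    simpa [mul_comm] using Finset.sum_le_sum fun j (_ : j ∈ Finset.range r) ↦ hterm j
  have hXr (x : Ω) : X x ≤ r :=
    (Finset.sum_le_card_nsmul _ _ 1 fun j _ ↦ sub_le_self 1 (hf0 j x)).trans (by simp)
  have hupper : ∫ x, X x ∂μ ≤ c * r / 2 + r * μ.real {x | c * r / 2 ≤ X x} :=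
    integral_le_add_mul_measureReal
      (Finset.measurable_sum _ fun j _ ↦ measurable_const.sub (hf j))
      (integrable_finsetSum _ fun j _ ↦ hint' j) (by positivity) (ae_of_all μ hXr)
  have hr' : (0 : ℝ) < r := by exact_mod_cast Nat.pos_of_ne_zero hr
  calc c / 2 ≤ μ.real {x | c * r / 2 ≤ X x} :=
        le_of_mul_le_mul_left (by linarith) hr'
    _ ≤ _ := measureReal_mono fun x hx ↦
        (prod_le_exp_neg_sum_one_sub _ fun j _ ↦ hf0 j x).trans
          (Real.exp_le_exp.2 (neg_le_neg hx))

lemma half_le_measureReal_fiberProb_pow_le_exp {K : ℕ} (hK : K ≠ 0) {ν : Measure UnitAddCircle}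
    [IsProbabilityMeasure ν] {c : ℝ} (hc0 : 0 ≤ c) (hc1 : c ≤ 1)
    (h : ∀ j, collisionProb K (ν.map (timesMap (K ^ j))) ≤ ENNReal.ofReal (1 - c))
    {r : ℕ} (hr : r ≠ 0) :
    c / 2 ≤ ν.real {x | fiberProb (K ^ r) ν x ≤ ENNReal.ofReal (Real.exp (-(c * r / 2)))} := by
  set F : ℕ → UnitAddCircle → ℝ≥0∞ := fun j x ↦ fiberProb K (ν.map (timesMap (K ^ j))) (K ^ j • x)
  have hF (j : ℕ) : Measurable (F j) := (measurable_fiberProb _ _).comp (measurable_timesMap _)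
  have hF1 : ∀ᵐ x ∂ν, ∀ j, F j x ≤ 1 := ae_all_iff.2 fun j ↦
    (ae_map_timesMap (measurableSet_le (measurable_fiberProb _ _) measurable_const)).1
      (fiberProb_le_one hK)
  have hFint (j : ℕ) : ∫ x, (F j x).toReal ∂ν ≤ 1 - c := by
    rw [integral_toReal (hF j).aemeasurable (hF1.mono fun x hx ↦ (hx j).trans_lt one_lt_top)]
    refine ENNReal.toReal_le_of_le_ofReal (by linarith) (le_of_eq_of_le ?_ (h j))
    exact (lintegral_map (measurable_fiberProb _ _) (measurable_timesMap _)).symm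
  refine (half_le_measureReal_prod_le_exp (fun j ↦ (hF j).ennreal_toReal)
    (fun _ _ ↦ toReal_nonneg) ?_ hc0 hFint hr).trans ?_
  · filter_upwards [hF1] with x hx j
    exact toReal_le_of_le_ofReal zero_le_one (by simpa using hx j)
  · refine toReal_mono (measure_ne_top _ _) (measure_mono_ae ?_)
    filter_upwards [hF1, fiberProb_pow hK (ν := ν) r] with x hx1 hprod hx
    have hne : ∏ j ∈ Finset.range r, F j x ≠ ∞ :=
      ENNReal.prod_ne_top fun j _ ↦ ((hx1 j).trans_lt one_lt_top).ne
    refine hprod.trans_le ?_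
    rw [← ofReal_toReal hne, toReal_prod]
    exact ofReal_le_ofReal hx

end SmallFiberProb

section FourierIntegrals

lemma integrable_fourier (ξ : ℤ) (ν : Measure UnitAddCircle) [IsFiniteMeasure ν] :
    Integrable (fun x ↦ (fourier ξ x : ℂ)) ν :=
  (map_continuous (fourier ξ)).integrable_of_hasCompactSupport (.of_compactSpace _)

lemma integral_fourier_eq_zero {ν : Measure UnitAddCircle} {t : UnitAddCircle}
    (hν : ν.map (· + t) = ν) {ξ : ℤ} (hξ : fourier ξ t ≠ (1 : ℂ)) :
    ∫ x, (fourier ξ x : ℂ) ∂ν = 0 := by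
  have htranslate : ∫ x, (fourier ξ x : ℂ) ∂ν = fourier ξ t * ∫ x, (fourier ξ x : ℂ) ∂ν := by
    conv_lhs => rw [← hν]
    rw [integral_map (measurable_add_const t).aemeasurable (by fun_prop), ← integral_const_mul]
    refine integral_congr_ae (.of_forall fun x ↦ ?_)
    simp only [fourier_apply, zsmul_add, AddCircle.toCircle_add, Circle.coe_mul, mul_comm]
  have hmul : (1 - fourier ξ t) * ∫ x, (fourier ξ x : ℂ) ∂ν = 0 := by
    rw [sub_mul, one_mul, ← htranslate, sub_self]
  exact (mul_eq_zero.1 hmul).resolve_left (sub_ne_zero.2 hξ.symm)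

lemma fourier_unitFrac_ne_one {q : ℕ} (hq : q ≠ 0) {ξ : ℤ} (h : ¬ (q : ℤ) ∣ ξ) :
    fourier ξ (unitFrac q) ≠ (1 : ℂ) := by
  rw [unitFrac, fourier_coe_apply, Ne, Complex.exp_eq_one_iff]
  rintro ⟨k, hk⟩
  refine h ⟨k, ?_⟩
  have hq' : (q : ℂ) ≠ 0 := Nat.cast_ne_zero.2 hq
  have hmul : (2 * Real.pi * Complex.I : ℂ) * ξ = 2 * Real.pi * Complex.I * (q * k) := by
    rw [mul_left_comm, mul_comm _ (k : ℂ), ← hk]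
    push_cast
    field_simp
  exact_mod_cast mul_left_cancel₀ Complex.two_pi_I_ne_zero hmul

lemma integral_fourier_torsionSum {q : ℕ} (hq : q ≠ 0) (ν : Measure UnitAddCircle) {ξ : ℤ}
    (h : ¬ (q : ℤ) ∣ ξ) : ∫ x, (fourier ξ x : ℂ) ∂torsionSum q ν = 0 :=
  integral_fourier_eq_zero (map_add_right_translateSum (nsmul_unitFrac hq))
    (fourier_unitFrac_ne_one hq h)

lemma integral_fourier_volume {ξ : ℤ} (hξ : ξ ≠ 0) :
    ∫ x : UnitAddCircle, (fourier ξ x : ℂ) = 0 := by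
  refine integral_fourier_eq_zero (t := unitFrac (ξ.natAbs + 1)) (map_add_right_eq_self volume _)
    (fourier_unitFrac_ne_one (Nat.succ_ne_zero _) fun h ↦ ?_)
  have hle := Nat.le_of_dvd (Int.natAbs_pos.2 hξ) (Int.natCast_dvd.1 h)
  omega

lemma measureReal_univ_torsionSum (q : ℕ) (ν : Measure UnitAddCircle) [IsProbabilityMeasure ν] :
    (torsionSum q ν).real Set.univ = q := by
  have h := lintegral_translateSum (t := unitFrac q) (q := q) (ν := ν) (f := fun _ ↦ 1)
    measurable_const
  simp only [lintegral_const, one_mul, measure_univ, Finset.sum_const, Finset.card_range,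
    nsmul_eq_mul, mul_one] at h
  rw [measureReal_def, torsionSum, h, toReal_natCast]

lemma integral_norm_sum_fourier_sq {ι : Type*} (s : Finset ι) (l : ι → ℤ)
    (ν : Measure UnitAddCircle) [IsFiniteMeasure ν]
    (h : ∀ i ∈ s, ∀ j ∈ s, i ≠ j → ∫ x, (fourier (l i - l j) x : ℂ) ∂ν = 0) :
    ∫ x, ‖∑ i ∈ s, (fourier (l i) x : ℂ)‖ ^ 2 ∂ν = s.card * ν.real Set.univ := by
  have hexpand (x : UnitAddCircle) : ((‖∑ i ∈ s, (fourier (l i) x : ℂ)‖ ^ 2 : ℝ) : ℂ)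
      = ∑ i ∈ s, ∑ j ∈ s, (fourier (l i - l j) x : ℂ) := by
    push_cast
    rw [← Complex.mul_conj', map_sum, Finset.sum_mul_sum]
    refine Finset.sum_congr rfl fun i _ ↦ Finset.sum_congr rfl fun j _ ↦ ?_
    rw [sub_eq_add_neg, fourier_add, fourier_neg]
  have hrow : ∀ i ∈ s, ∫ x, ∑ j ∈ s, (fourier (l i - l j) x : ℂ) ∂ν = ν.real Set.univ := by
    intro i hi
    rw [integral_finsetSum _ fun j _ ↦ integrable_fourier _ _,
      Finset.sum_eq_single_of_mem i hi fun j hj hji ↦ h i hi j hj hji.symm]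
    simp
  have hcomplex : ((∫ x, ‖∑ i ∈ s, (fourier (l i) x : ℂ)‖ ^ 2 ∂ν : ℝ) : ℂ)
      = (s.card * ν.real Set.univ : ℝ) := by
    rw [← integral_complex_ofReal]
    simp_rw [hexpand]
    rw [integral_finsetSum _ fun i _ ↦ integrable_finsetSum _ fun j _ ↦ integrable_fourier _ _,
      Finset.sum_congr rfl hrow]
    simp
  exact_mod_cast hcomplex

end FourierIntegrals

section ExponentialSums

lemma sq_lintegral_le_lintegral_sq {Ω : Type*} [MeasurableSpace Ω] {μ : Measure Ω}
    (hμ : μ Set.univ ≤ 1) {f : Ω → ℝ≥0∞} (hf : AEMeasurable f μ) :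
    (∫⁻ x, f x ∂μ) ^ 2 ≤ ∫⁻ x, f x ^ 2 ∂μ := by
  have hholder := lintegral_mul_le_Lp_mul_Lq μ Real.HolderConjugate.two_two hf
    (aemeasurable_const (b := 1))
  simp only [Pi.mul_apply, mul_one, one_pow, lintegral_const, one_mul, rpow_two] at hholder
  have hmass : μ Set.univ ^ (1 / 2 : ℝ) ≤ 1 := rpow_le_one hμ (by norm_num)
  calc (∫⁻ x, f x ∂μ) ^ 2 ≤ ((∫⁻ x, f x ^ 2 ∂μ) ^ (1 / 2 : ℝ)) ^ 2 := by
        gcongr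
        exact hholder.trans (mul_le_of_le_one_right' hmass)
    _ = ∫⁻ x, f x ^ 2 ∂μ := by
        rw [← rpow_two, ← rpow_mul]
        norm_num

lemma setLIntegral_fiberProb_le {q : ℕ} (hq : q ≠ 0) (ν : Measure UnitAddCircle)
    [IsFiniteMeasure ν] (a : ℝ≥0∞) {f : UnitAddCircle → ℝ≥0∞} (hf : Measurable f) :
    ∫⁻ x in {x | fiberProb q ν x ≤ a}, f x ∂ν ≤ a * ∫⁻ x, f x ∂torsionSum q ν := by
  have hA : MeasurableSet {x | fiberProb q ν x ≤ a} :=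
    measurableSet_le (measurable_fiberProb q ν) measurable_const
  rw [← lintegral_indicator hA, lintegral_eq_lintegral_fiberProb_mul hq (hf.indicator hA),
    ← lintegral_const_mul a hf]
  refine lintegral_mono fun x ↦ ?_
  by_cases hx : x ∈ {x | fiberProb q ν x ≤ a}
  · rw [Set.indicator_of_mem hx]
    exact mul_le_mul_left hx _
  · rw [Set.indicator_of_notMem hx, mul_zero]
    exact zero_le

lemma norm_setIntegral_sum_fourier_sq_le {N : ℕ} (hN : N ≠ 0) (ν : Measure UnitAddCircle)
    [IsProbabilityMeasure ν] {ι : Type*} (s : Finset ι) (l : ι → ℤ)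
    (hl : ∀ i ∈ s, ∀ j ∈ s, i ≠ j → ¬ (N : ℤ) ∣ l i - l j) {ε : ℝ} (hε : 0 ≤ ε) :
    ‖∫ x in {x | fiberProb N ν x ≤ ENNReal.ofReal ε}, ∑ i ∈ s, (fourier (l i) x : ℂ) ∂ν‖ ^ 2
      ≤ ε * (s.card * N) := by
  set A := {x | fiberProb N ν x ≤ ENNReal.ofReal ε}
  set E : UnitAddCircle → ℂ := fun x ↦ ∑ i ∈ s, (fourier (l i) x : ℂ)
  have hE : Continuous E := by fun_prop
  have hL2 : ∫⁻ x, ‖E x‖ₑ ^ 2 ∂torsionSum N ν = ENNReal.ofReal (s.card * N) := by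
    have hint : Integrable (fun x ↦ ‖E x‖ ^ 2) (torsionSum N ν) :=
      (hE.norm.pow 2).integrable_of_hasCompactSupport (.of_compactSpace _)
    rw [← measureReal_univ_torsionSum N ν, ← integral_norm_sum_fourier_sq s l (torsionSum N ν)
        fun i hi j hj hij ↦ integral_fourier_torsionSum hN ν (hl i hi j hj hij),
      ofReal_integral_eq_lintegral_ofReal hint (.of_forall fun x ↦ sq_nonneg _)]
    simp_rw [ofReal_pow (norm_nonneg _), ofReal_norm]
  have henorm : ‖∫ x in A, E x ∂ν‖ₑ ^ 2 ≤ ENNReal.ofReal (ε * (s.card * N)) :=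
    calc ‖∫ x in A, E x ∂ν‖ₑ ^ 2 ≤ (∫⁻ x in A, ‖E x‖ₑ ∂ν) ^ 2 := by
          gcongr
          exact enorm_integral_le_lintegral_enorm _
      _ ≤ ∫⁻ x in A, ‖E x‖ₑ ^ 2 ∂ν := sq_lintegral_le_lintegral_sq
          (by rw [Measure.restrict_apply_univ]; exact prob_le_one) hE.measurable.enorm.aemeasurable
      _ ≤ ENNReal.ofReal ε * ∫⁻ x, ‖E x‖ₑ ^ 2 ∂torsionSum N ν :=
          setLIntegral_fiberProb_le hN ν _ (hE.measurable.enorm.pow_const 2)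
      _ = ENNReal.ofReal (ε * (s.card * N)) := by rw [hL2, ofReal_mul hε]
  rwa [← ofReal_norm, ← ofReal_pow (norm_nonneg _), ofReal_le_ofReal_iff (by positivity)] at henorm

end ExponentialSums

section AveragedMap

variable {α : Type*} [MeasurableSpace α]

/-- The average of the pushforwards of `ν` under the first `S` terms of a sequence of maps. -/
noncomputable def averagedMap (τ : ℕ → α → α) (S : ℕ) (ν : Measure α) : Measure α :=
  (S : ℝ≥0∞)⁻¹ • ∑ s ∈ Finset.range S, ν.map (τ s)

variable {τ : ℕ → α → α} {S : ℕ} {μ ν : Measure α}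

lemma averagedMap_le (h : ∀ s < S, ν.map (τ s) ≤ μ) : averagedMap τ S ν ≤ μ := by
  refine Measure.le_intro fun B _ _ ↦ ?_
  rw [averagedMap, Measure.smul_apply, Measure.finsetSum_apply, smul_eq_mul]
  calc (S : ℝ≥0∞)⁻¹ * ∑ s ∈ Finset.range S, ν.map (τ s) B
      ≤ (S : ℝ≥0∞)⁻¹ * ∑ _s ∈ Finset.range S, μ B := by
        gcongr with s hs
        exact h s (Finset.mem_range.1 hs)
    _ ≤ μ B := by
        rw [Finset.sum_const, Finset.card_range, nsmul_eq_mul, ← mul_assoc]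
        exact mul_le_of_le_one_left' (ENNReal.inv_mul_le_one _)

lemma averagedMap_univ (hτ : ∀ s, Measurable (τ s)) (hS : S ≠ 0) :
    averagedMap τ S ν Set.univ = ν Set.univ := by
  rw [averagedMap, Measure.smul_apply, Measure.finsetSum_apply, smul_eq_mul]
  simp only [Measure.map_apply (hτ _) MeasurableSet.univ, Set.preimage_univ, Finset.sum_const,
    Finset.card_range, nsmul_eq_mul]
  exact ENNReal.inv_mul_cancel_left (Nat.cast_ne_zero.2 hS) (natCast_ne_top S)

lemma norm_integral_fourier_averagedMap_sq_le {N : ℕ} (hN : N ≠ 0) (ν : Measure UnitAddCircle)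
    [IsProbabilityMeasure ν] {S : ℕ} (hS : S ≠ 0) (a : ℕ → ℕ) (ξ : ℤ)
    (ha : ∀ s < S, ∀ t < S, s ≠ t → ¬ (N : ℤ) ∣ ξ * a s - ξ * a t) {ε : ℝ} (hε : 0 ≤ ε) :
    ‖∫ x, (fourier ξ x : ℂ) ∂averagedMap (fun s ↦ timesMap (a s)) S
      (ν.restrict {x | fiberProb N ν x ≤ ENNReal.ofReal ε})‖ ^ 2 ≤ ε * (N / S) := by
  set A := {x | fiberProb N ν x ≤ ENNReal.ofReal ε}
  have hmap (s : ℕ) : ∫ x, (fourier ξ x : ℂ) ∂(ν.restrict A).map (timesMap (a s))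
      = ∫ x in A, (fourier (ξ * a s) x : ℂ) ∂ν := by
    rw [integral_map (measurable_timesMap _).aemeasurable (by fun_prop)]
    simp only [fourier_apply, mul_zsmul, natCast_zsmul]
  have hsum : ∫ x, (fourier ξ x : ℂ) ∂averagedMap (fun s ↦ timesMap (a s)) S (ν.restrict A)
      = (S : ℝ)⁻¹ • ∫ x in A, ∑ s ∈ Finset.range S, (fourier (ξ * a s) x : ℂ) ∂ν := by
    rw [averagedMap, integral_smul_measure, toReal_inv, toReal_natCast,
      integral_finsetSum_measure fun s _ ↦ integrable_fourier _ _,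
      integral_finsetSum _ fun s _ ↦ integrable_fourier _ _]
    simp_rw [hmap]
  have hbound := norm_setIntegral_sum_fourier_sq_le hN ν (Finset.range S) (fun s ↦ ξ * a s)
    (fun s hs t ht ↦ ha s (Finset.mem_range.1 hs) t (Finset.mem_range.1 ht)) hε
  rw [Finset.card_range] at hbound
  have : (S : ℝ) ≠ 0 := Nat.cast_ne_zero.2 hS
  rw [hsum, norm_smul, mul_pow, norm_inv, RCLike.norm_natCast, inv_pow]
  calc ((S : ℝ) ^ 2)⁻¹ * _ ≤ ((S : ℝ) ^ 2)⁻¹ * (ε * (S * N)) := by gcongr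
    _ = ε * (N / S) := by field_simp

end AveragedMap

section SmallFourierCoefficients

variable {G : Type*} [AddCommGroup G] [MeasurableSpace G] [MeasurableAdd₂ G] {μ : Measure G}

lemma map_timesMap_pow_mul_pow {g α β : ℕ} (hα : μ.map (timesMap (g * α)) = μ)
    (hβ : μ.map (timesMap (g * β)) = μ) {s S : ℕ} (hs : s ≤ S) :
    (μ.map (timesMap (g ^ S))).map (timesMap (α ^ s * β ^ (S - s))) = μ := by
  obtain ⟨t, rfl⟩ := Nat.exists_eq_add_of_le hs
  have hfactor : g ^ (s + t) * (α ^ s * β ^ (s + t - s)) = (g * α) ^ s * (g * β) ^ t := by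
    rw [Nat.add_sub_cancel_left]
    ring
  rw [map_timesMap_timesMap, hfactor, ← map_timesMap_timesMap, map_timesMap_pow hα,
    map_timesMap_pow hβ]

lemma natCast_div_div_self_le {n r : ℕ} (hr : r ≠ 0) (hrn : r ≤ n) :
    (n : ℝ) / (n / r : ℕ) ≤ 2 * r := by
  have hpos : 0 < n / r := Nat.div_pos hrn (Nat.pos_of_ne_zero hr)
  rw [div_le_iff₀ (Nat.cast_pos.2 hpos)]
  have hlt : n < r * (n / r + 1) := Nat.lt_mul_div_succ n (Nat.pos_of_ne_zero hr)
  exact_mod_cast (by nlinarith : n ≤ 2 * r * (n / r))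

variable {μ : Measure UnitAddCircle} [IsProbabilityMeasure μ] {K g α β : ℕ} {c : ℝ}

lemma exists_le_norm_integral_fourier_sq_le (hK : 2 ≤ K)
    (hμα : μ.map (timesMap (g * α)) = μ) (hμβ : μ.map (timesMap (g * β)) = μ)
    (hc0 : 0 ≤ c) (hc1 : c ≤ 1)
    (h : ∀ S j, collisionProb K (μ.map (timesMap (g ^ S * K ^ j))) ≤ ENNReal.ofReal (1 - c))
    {D : ℕ} (hD : ∀ (r S : ℕ) (ξ : ℤ), ξ ≠ 0 → D * ξ.natAbs * S ≤ K ^ r →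
      ∀ s < S, ∀ t < S, s ≠ t → ¬ ((K ^ r : ℕ) : ℤ) ∣
        ξ * (α ^ s * β ^ (S - s) : ℕ) - ξ * (α ^ t * β ^ (S - t) : ℕ))
    {r : ℕ} (hr : r ≠ 0) :
    ∃ ρ ≤ μ, c / 2 ≤ ρ.real Set.univ ∧ ∀ ξ : ℤ, ξ ≠ 0 → D * ξ.natAbs ≤ r →
      ‖∫ x, (fourier ξ x : ℂ) ∂ρ‖ ^ 2 ≤ Real.exp (-(c * r / 2)) * (2 * r) := by
  have hrK : r ≤ K ^ r := (Nat.lt_pow_self hK).le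
  set S := K ^ r / r
  have hS : S ≠ 0 := (Nat.div_pos hrK (Nat.pos_of_ne_zero hr)).ne'
  set ν := μ.map (timesMap (g ^ S))
  set A := {x | fiberProb (K ^ r) ν x ≤ ENNReal.ofReal (Real.exp (-(c * r / 2)))}
  have hmass : c / 2 ≤ ν.real A := by
    refine half_le_measureReal_fiberProb_pow_le_exp (by omega) hc0 hc1 (fun j ↦ ?_) hr
    rw [map_timesMap_timesMap]
    exact h S j
  refine ⟨averagedMap (fun s ↦ timesMap (α ^ s * β ^ (S - s))) S (ν.restrict A),
    averagedMap_le fun s hs ↦ ?_, ?_, fun ξ hξ hξr ↦ ?_⟩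
  · exact (Measure.map_mono Measure.restrict_le_self (measurable_timesMap _)).trans_eq
      (map_timesMap_pow_mul_pow hμα hμβ hs.le)
  · rwa [measureReal_def, averagedMap_univ (fun s ↦ measurable_timesMap _) hS,
      Measure.restrict_apply_univ]
  · have hS_le : D * ξ.natAbs * S ≤ K ^ r :=
      (Nat.mul_le_mul_right S hξr).trans (Nat.mul_div_le _ _)
    have hK0 : K ^ r ≠ 0 := pow_ne_zero r (by omega)
    refine (norm_integral_fourier_averagedMap_sq_le hK0 ν hS _ ξ (hD r S ξ hξ hS_le)
      (Real.exp_pos _).le).trans ?_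
    gcongr
    exact natCast_div_div_self_le hr hrK

lemma tendsto_exp_neg_mul_two_mul (hc : 0 < c) :
    Tendsto (fun r : ℕ ↦ Real.exp (-(c * r / 2)) * (2 * r)) atTop (𝓝 0) := by
  have hlim : Tendsto (fun r : ℕ ↦ c / 2 * (r : ℝ)) atTop atTop :=
    tendsto_natCast_atTop_atTop.const_mul_atTop (by positivity)
  have h := ((Real.tendsto_pow_mul_exp_neg_atTop_nhds_zero 1).comp hlim).const_mul (4 / c)
  rw [mul_zero] at h
  refine h.congr fun r ↦ ?_
  simp only [Function.comp_apply, pow_one]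
  field_simp
  ring

lemma exists_seq_le_tendsto_integral_fourier (hK : 2 ≤ K) (hα : α.Coprime K) (hβ : β.Coprime K)
    (hαβ : α ≠ β) (hμα : μ.map (timesMap (g * α)) = μ) (hμβ : μ.map (timesMap (g * β)) = μ)
    (hc0 : 0 < c) (hc1 : c ≤ 1)
    (h : ∀ S j, collisionProb K (μ.map (timesMap (g ^ S * K ^ j))) ≤ ENNReal.ofReal (1 - c)) :
    ∃ ρ : ℕ → Measure UnitAddCircle, (∀ r, ρ r ≤ μ) ∧ (∀ r, c / 2 ≤ (ρ r).real Set.univ) ∧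
      ∀ ξ : ℤ, ξ ≠ 0 → Tendsto (fun r ↦ ∫ x, (fourier ξ x : ℂ) ∂ρ r) atTop (𝓝 0) := by
  obtain ⟨D, -, hD⟩ := exists_pow_not_dvd_mul_sub (by omega) hα hβ hαβ
  choose ρ hρμ hρc hρξ using fun r : ℕ ↦
    exists_le_norm_integral_fourier_sq_le hK hμα hμβ hc0.le hc1 h hD r.succ_ne_zero
  refine ⟨ρ, hρμ, hρc, fun ξ hξ ↦ ?_⟩
  have hsq : Tendsto (fun r ↦ ‖∫ x, (fourier ξ x : ℂ) ∂ρ r‖ ^ 2) atTop (𝓝 0) := by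
    refine squeeze_zero' (.of_forall fun r ↦ sq_nonneg _) ?_
      ((tendsto_add_atTop_iff_nat 1).2 (tendsto_exp_neg_mul_two_mul hc0))
    filter_upwards [eventually_ge_atTop (D * ξ.natAbs)] with r hr
    exact hρξ r ξ hξ (hr.trans r.le_succ)
  rw [tendsto_zero_iff_norm_tendsto_zero]
  simpa using hsq.sqrt

end SmallFourierCoefficients

section Weyl

instance : IsProbabilityMeasure (volume : Measure UnitAddCircle) := ⟨UnitAddCircle.measure_univ⟩

lemma norm_integral_sub_mul_integral_volume_le {ν : Measure UnitAddCircle}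
    (hν : ν Set.univ ≤ 1) (f : C(UnitAddCircle, ℂ)) :
    ‖∫ x, f x ∂ν - ν.real Set.univ * ∫ x, f x‖ ≤ 2 * ‖f‖ := by
  have : IsFiniteMeasure ν := ⟨hν.trans_lt one_lt_top⟩
  have hmass : ν.real Set.univ ≤ 1 := toReal_le_of_le_ofReal zero_le_one (by simpa using hν)
  have hnorm (m : Measure UnitAddCircle) [IsFiniteMeasure m] :
      ‖∫ x, f x ∂m‖ ≤ ‖f‖ * m.real Set.univ :=
    norm_integral_le_of_norm_le_const (.of_forall f.norm_coe_le_norm)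
  have hvol : ‖∫ x, f x‖ ≤ ‖f‖ := by simpa using hnorm volume
  calc ‖∫ x, f x ∂ν - ν.real Set.univ * ∫ x, f x‖
      ≤ ‖∫ x, f x ∂ν‖ + ν.real Set.univ * ‖∫ x, f x‖ := by
        refine (norm_sub_le _ _).trans_eq ?_
        rw [norm_mul, Complex.norm_real, Real.norm_of_nonneg measureReal_nonneg]
    _ ≤ ‖f‖ * 1 + 1 * ‖f‖ := by
        gcongr
        exact (hnorm ν).trans (by gcongr)
    _ = 2 * ‖f‖ := by ring

lemma integrable_continuousMap (m : Measure UnitAddCircle) [IsFiniteMeasure m]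
    (f : C(UnitAddCircle, ℂ)) : Integrable f m :=
  f.continuous.integrable_of_hasCompactSupport (.of_compactSpace _)

lemma tendsto_integral_sub_mul_integral_volume_of_mem_span {ι : Type*} {l : Filter ι}
    {ρ : ι → Measure UnitAddCircle} [∀ i, IsFiniteMeasure (ρ i)]
    (h : ∀ ξ : ℤ, ξ ≠ 0 → Tendsto (fun i ↦ ∫ x, (fourier ξ x : ℂ) ∂ρ i) l (𝓝 0))
    {P : C(UnitAddCircle, ℂ)} (hP : P ∈ Submodule.span ℂ (Set.range (@fourier 1))) :
    Tendsto (fun i ↦ ∫ x, P x ∂ρ i - (ρ i).real Set.univ * ∫ x, P x) l (𝓝 0) := by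
  induction hP using Submodule.span_induction with
  | mem P hP =>
    obtain ⟨ξ, rfl⟩ := hP
    rcases eq_or_ne ξ 0 with rfl | hξ
    · simp [tendsto_const_nhds]
    · refine (h ξ hξ).congr fun i ↦ ?_
      rw [integral_fourier_volume hξ, mul_zero, sub_zero]
  | zero => simp [tendsto_const_nhds]
  | add P Q _ _ hP hQ =>
    rw [← zero_add 0]
    refine (hP.add hQ).congr fun i ↦ ?_
    simp only [ContinuousMap.add_apply]
    rw [integral_add (integrable_continuousMap _ P) (integrable_continuousMap _ Q),
      integral_add (integrable_continuousMap _ P) (integrable_continuousMap _ Q)]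
    ring
  | smul a P _ hP =>
    rw [← mul_zero a]
    refine (hP.const_mul a).congr fun i ↦ ?_
    simp only [ContinuousMap.smul_apply, smul_eq_mul, integral_const_mul]
    ring

lemma tendsto_integral_sub_mul_integral_volume {ι : Type*} {l : Filter ι}
    {ρ : ι → Measure UnitAddCircle} (hρ : ∀ i, ρ i Set.univ ≤ 1)
    (h : ∀ ξ : ℤ, ξ ≠ 0 → Tendsto (fun i ↦ ∫ x, (fourier ξ x : ℂ) ∂ρ i) l (𝓝 0))
    (f : C(UnitAddCircle, ℂ)) :
    Tendsto (fun i ↦ ∫ x, f x ∂ρ i - (ρ i).real Set.univ * ∫ x, f x) l (𝓝 0) := by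
  have (i : ι) : IsFiniteMeasure (ρ i) := ⟨(hρ i).trans_lt one_lt_top⟩
  have hdense : f ∈ closure (Submodule.span ℂ (Set.range (@fourier 1)) : Set _) := by
    rw [← Submodule.topologicalClosure_coe, span_fourier_closure_eq_top]
    trivial
  refine Metric.tendsto_nhds.2 fun ε hε ↦ ?_
  obtain ⟨P, hP, hfP⟩ := Metric.mem_closure_iff.1 hdense (ε / 4) (by positivity)
  filter_upwards [Metric.tendsto_nhds.1
    (tendsto_integral_sub_mul_integral_volume_of_mem_span h hP) (ε / 2) (by positivity)] with i hi
  have hsplit : ∫ x, f x ∂ρ i - (ρ i).real Set.univ * ∫ x, f x =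
      (∫ x, (f - P) x ∂ρ i - (ρ i).real Set.univ * ∫ x, (f - P) x) +
        (∫ x, P x ∂ρ i - (ρ i).real Set.univ * ∫ x, P x) := by
    simp only [ContinuousMap.sub_apply]
    rw [integral_sub (integrable_continuousMap _ f) (integrable_continuousMap _ P),
      integral_sub (integrable_continuousMap _ f) (integrable_continuousMap _ P)]
    ring
  have hsmall := norm_integral_sub_mul_integral_volume_le (hρ i) (f - P)
  rw [dist_zero_right] at hi ⊢
  rw [dist_eq_norm] at hfP
  rw [hsplit]
  exact (norm_add_le _ _).trans_lt (by linarith)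

lemma mul_integral_volume_le_of_tendsto {ι : Type*} {l : Filter ι} [l.NeBot]
    {μ : Measure UnitAddCircle} [IsProbabilityMeasure μ] {ρ : ι → Measure UnitAddCircle}
    (hρ : ∀ i, ρ i ≤ μ) {δ : ℝ} (hδ : ∀ i, δ ≤ (ρ i).real Set.univ)
    (h : ∀ ξ : ℤ, ξ ≠ 0 → Tendsto (fun i ↦ ∫ x, (fourier ξ x : ℂ) ∂ρ i) l (𝓝 0))
    {f : UnitAddCircle → ℝ} (hf : Continuous f) (hf0 : ∀ x, 0 ≤ f x) :
    δ * ∫ x, f x ≤ ∫ x, f x ∂μ := by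
  have hlim := (Complex.continuous_re.tendsto _).comp (tendsto_integral_sub_mul_integral_volume
    (fun i ↦ (hρ i Set.univ).trans prob_le_one) h ⟨fun x ↦ (f x : ℂ), by fun_prop⟩)
  have hbound (i : ι) : ∫ x, f x ∂ρ i - (ρ i).real Set.univ * ∫ x, f x
      ≤ ∫ x, f x ∂μ - δ * ∫ x, f x := by
    have hint : Integrable f μ := hf.integrable_of_hasCompactSupport (.of_compactSpace _)
    exact sub_le_sub (integral_mono_measure (hρ i) (.of_forall hf0) hint)
      (mul_le_mul_of_nonneg_right (hδ i) (integral_nonneg fun x ↦ hf0 x))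
  refine sub_nonneg.1 (le_of_tendsto hlim (.of_forall fun i ↦ le_of_eq_of_le ?_ (hbound i)))
  simp only [Function.comp_apply, ContinuousMap.coe_mk]
  rw [integral_complex_ofReal, integral_complex_ofReal, ← Complex.ofReal_mul,
    ← Complex.ofReal_sub, Complex.ofReal_re]

lemma measure_le_of_forall_lintegral_le {X : Type*} [TopologicalSpace X]
    [TopologicalSpace.PseudoMetrizableSpace X] [MeasurableSpace X] [BorelSpace X]
    {μ ν : Measure X} [IsFiniteMeasure μ] [IsFiniteMeasure ν]
    (h : ∀ f : BoundedContinuousFunction X NNReal, ∫⁻ x, f x ∂μ ≤ ∫⁻ x, f x ∂ν) : μ ≤ ν := by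
  have hclosed {F : Set X} (hF : IsClosed F) : μ F ≤ ν F :=
    le_of_tendsto_of_tendsto' (HasOuterApproxClosed.tendsto_lintegral_apprSeq hF μ)
      (HasOuterApproxClosed.tendsto_lintegral_apprSeq hF ν) fun n ↦ h (hF.apprSeq n)
  refine Measure.le_intro fun B hB _ ↦ ?_
  rw [hB.measure_eq_iSup_isClosed_of_ne_top (measure_ne_top μ B)]
  exact iSup₂_le fun F hFB ↦ iSup_le fun hF ↦ (hclosed hF).trans (measure_mono hFB)

lemma smul_volume_le_of_tendsto {ι : Type*} {l : Filter ι} [l.NeBot]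
    {μ : Measure UnitAddCircle} [IsProbabilityMeasure μ] {ρ : ι → Measure UnitAddCircle}
    (hρ : ∀ i, ρ i ≤ μ) {δ : ℝ} (hδ0 : 0 ≤ δ) (hδ : ∀ i, δ ≤ (ρ i).real Set.univ)
    (h : ∀ ξ : ℤ, ξ ≠ 0 → Tendsto (fun i ↦ ∫ x, (fourier ξ x : ℂ) ∂ρ i) l (𝓝 0)) :
    ENNReal.ofReal δ • (volume : Measure UnitAddCircle) ≤ μ := by
  have := Measure.smul_finite (volume : Measure UnitAddCircle) (ofReal_ne_top (r := δ))
  refine measure_le_of_forall_lintegral_le fun f ↦ ?_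
  have hcont : Continuous fun x ↦ (f x : ℝ) := by fun_prop
  have hlintegral (m : Measure UnitAddCircle) [IsFiniteMeasure m] :
      ∫⁻ x, f x ∂m = ENNReal.ofReal (∫ x, (f x : ℝ) ∂m) := by
    rw [ofReal_integral_eq_lintegral_ofReal (hcont.integrable_of_hasCompactSupport
      (.of_compactSpace _)) (.of_forall fun x ↦ (f x).2)]
    simp only [ofReal_coe_nnreal]
  rw [lintegral_smul_measure, hlintegral, hlintegral, smul_eq_mul, ← ofReal_mul hδ0]
  exact ofReal_le_ofReal (mul_integral_volume_le_of_tendsto hρ hδ h hcont fun x ↦ (f x).2)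

end Weyl

section JointErgodicity

variable {X : Type*} [MeasurableSpace X] {μ ν : Measure X} {S T : X → X}

lemma exists_superset_null_preimage_subset (hS : MeasurePreserving S ν ν)
    (hT : MeasurePreserving T ν ν) (hST : Function.Commute S T) {N : Set X}
    (hN : MeasurableSet N) (hN0 : ν N = 0) :
    ∃ B, N ⊆ B ∧ MeasurableSet B ∧ ν B = 0 ∧ S ⁻¹' B ⊆ B ∧ T ⁻¹' B ⊆ B := by
  have hpres (i j : ℕ) : MeasurePreserving (S^[i] ∘ T^[j]) ν ν := (hS.iterate i).comp (hT.iterate j)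
  refine ⟨⋃ (i) (j), (S^[i] ∘ T^[j]) ⁻¹' N, fun x hx ↦ ?_, ?_, ?_, fun x hx ↦ ?_, fun x hx ↦ ?_⟩
  · exact Set.mem_iUnion₂.2 ⟨0, 0, hx⟩
  · exact .iUnion fun i ↦ .iUnion fun j ↦ (hpres i j).measurable hN
  · simp only [measure_iUnion_null_iff]
    exact fun i j ↦ ((hpres i j).measure_preimage hN.nullMeasurableSet).trans hN0
  · obtain ⟨i, j, hij⟩ := Set.mem_iUnion₂.1 hx
    refine Set.mem_iUnion₂.2 ⟨i + 1, j, ?_⟩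
    rwa [Set.mem_preimage, Function.comp_apply, ← (hST.iterate_right j).eq,
      ← Function.iterate_succ_apply] at hij
  · obtain ⟨i, j, hij⟩ := Set.mem_iUnion₂.1 hx
    exact Set.mem_iUnion₂.2 ⟨i, j + 1, hij⟩

lemma exists_subset_ae_eq_preimage_eq [IsFiniteMeasure μ] (hS : MeasurePreserving S μ μ)
    (hT : MeasurePreserving T μ μ) (hST : Function.Commute S T) {B : Set X}
    (hB : MeasurableSet B) (hSB : S ⁻¹' B ⊆ B) (hTB : T ⁻¹' B ⊆ B) :
    ∃ A ⊆ B, MeasurableSet A ∧ A =ᵐ[μ] B ∧ S ⁻¹' A = A ∧ T ⁻¹' A = A := by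
  have hpres (k : ℕ) : MeasurePreserving (S ∘ T)^[k] μ μ := (hS.comp hT).iterate k
  have hsubset (k : ℕ) : (S ∘ T)^[k] ⁻¹' B ⊆ B := by
    induction k with
    | zero => exact subset_rfl
    | succ k ih => exact fun x hx ↦ hTB (hSB (ih hx))
  have hinv {U V : X → X} (hUV : S ∘ T = V ∘ U) (hcomm : Function.Commute (S ∘ T) U)
      (hU : U ⁻¹' B ⊆ B) (hV : V ⁻¹' B ⊆ B) :
      U ⁻¹' (⋂ k, (S ∘ T)^[k] ⁻¹' B) = ⋂ k, (S ∘ T)^[k] ⁻¹' B := by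
    ext x
    simp only [Set.mem_preimage, Set.mem_iInter, (hcomm.iterate_left _).eq x]
    refine ⟨fun hx k ↦ hU (hx k), fun hx k ↦ hV ?_⟩
    have hk := hx (k + 1)
    rw [Function.iterate_succ_apply', congrFun hUV] at hk
    exact hk
  refine ⟨⋂ k, (S ∘ T)^[k] ⁻¹' B, Set.iInter_subset _ 0, .iInter fun k ↦ (hpres k).measurable hB,
    ?_, hinv hST.comp_eq ((Function.Commute.refl S).comp_left hST.symm) hSB hTB,
    hinv rfl (hST.comp_left (.refl T)) hTB hSB⟩
  have hae (k : ℕ) : (S ∘ T)^[k] ⁻¹' B =ᵐ[μ] B :=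
    ae_eq_of_subset_of_measure_ge (hsubset k) ((hpres k).measure_preimage hB.nullMeasurableSet).ge
      ((hpres k).measurable hB).nullMeasurableSet (measure_ne_top μ B)
  simpa only [Set.iInter_const] using Filter.EventuallyEq.countable_iInter hae

lemma absolutelyContinuous_of_jointly_ergodic [IsProbabilityMeasure μ] [NeZero ν]
    (hSμ : MeasurePreserving S μ μ) (hTμ : MeasurePreserving T μ μ)
    (hSν : MeasurePreserving S ν ν) (hTν : MeasurePreserving T ν ν) (hST : Function.Commute S T)
    (herg : ∀ A, MeasurableSet A → S ⁻¹' A = A → T ⁻¹' A = A → μ A = 0 ∨ μ A = 1)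
    (hνμ : ν ≪ μ) : μ ≪ ν := by
  refine .mk fun N hN hN0 ↦ ?_
  obtain ⟨B, hNB, hB, hB0, hSB, hTB⟩ := exists_superset_null_preimage_subset hSν hTν hST hN hN0
  obtain ⟨A, hAB, hA, hAeq, hSA, hTA⟩ := exists_subset_ae_eq_preimage_eq hSμ hTμ hST hB hSB hTB
  rcases herg A hA hSA hTA with h0 | h1
  · exact measure_mono_null hNB (measure_congr hAeq ▸ h0)
  · have hcompl : ν Aᶜ = 0 := hνμ ((prob_compl_eq_zero_iff hA).2 h1)
    have huniv : ν Set.univ = 0 := by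
      rw [← Set.union_compl_self A]
      exact measure_union_null (measure_mono_null hAB hB0) hcompl
    exact absurd (Measure.measure_univ_eq_zero.1 huniv) (NeZero.ne ν)

lemma eq_volume_of_smul_volume_le {n m : ℕ} (hn : 2 ≤ n) (hm : 2 ≤ m)
    {μ : Measure UnitAddCircle} [IsProbabilityMeasure μ] (hμn : μ.map (timesMap n) = μ)
    (hμm : μ.map (timesMap m) = μ)
    (herg : ∀ A, MeasurableSet A → timesMap n ⁻¹' A = A → timesMap m ⁻¹' A = A →
      μ A = 0 ∨ μ A = 1)
    {δ : ℝ≥0∞} (hδ : δ ≠ 0) (h : δ • volume ≤ μ) : μ = volume := by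
  have hpres {k : ℕ} (hk : μ.map (timesMap k) = μ) : MeasurePreserving (timesMap k) μ μ :=
    ⟨measurable_timesMap k, hk⟩
  have hvol {k : ℕ} (hk : 2 ≤ k) : Ergodic (timesMap k) (volume : Measure UnitAddCircle) :=
    AddCircle.ergodic_nsmul hk
  have hac : volume ≪ μ :=
    (Measure.absolutelyContinuous_smul hδ).trans (Measure.absolutelyContinuous_of_le h)
  exact (hvol hn).eq_of_absolutelyContinuous (hpres hμn)
    (absolutelyContinuous_of_jointly_ergodic (hpres hμn) (hpres hμm)
      (hvol hn).toMeasurePreserving (hvol hm).toMeasurePreserving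
      (fun x ↦ smul_comm n m x) herg hac)

end JointErgodicity

section Arithmetic

lemma exists_eq_mul_coprime_dvd_pow {n : ℕ} (hn : n ≠ 0) (w : ℕ) :
    ∃ Q n' k : ℕ, n = Q * n' ∧ Q.Coprime w ∧ n' ∣ w ^ k := by
  induction n using Nat.recOnMul with
  | zero => exact absurd rfl hn
  | one => exact ⟨1, 1, 0, rfl, Nat.coprime_one_left w, dvd_rfl⟩
  | prime p hp =>
    by_cases hpw : p ∣ w
    · exact ⟨1, p, 1, (one_mul p).symm, Nat.coprime_one_left w, by rwa [pow_one]⟩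
    · exact ⟨p, 1, 0, (mul_one p).symm, hp.coprime_iff_not_dvd.2 hpw, one_dvd _⟩
  | mul a b iha ihb =>
    obtain ⟨Q₁, n₁, k₁, rfl, hQ₁, hn₁⟩ := iha (left_ne_zero_of_mul hn)
    obtain ⟨Q₂, n₂, k₂, rfl, hQ₂, hn₂⟩ := ihb (right_ne_zero_of_mul hn)
    refine ⟨Q₁ * Q₂, n₁ * n₂, k₁ + k₂, mul_mul_mul_comm .., hQ₁.mul_left hQ₂, ?_⟩
    rw [pow_add]
    exact mul_dvd_mul hn₁ hn₂

lemma prime_dvd_div_gcd_iff {a b q : ℕ} (ha : a ≠ 0) (hb : b ≠ 0) (hq : q.Prime) :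
    q ∣ a / a.gcd b ↔ b.factorization q < a.factorization q := by
  have hne : a / a.gcd b ≠ 0 := Nat.div_ne_zero_iff_of_dvd (Nat.gcd_dvd_left a b) |>.2
    ⟨ha, Nat.gcd_ne_zero_left ha⟩
  rw [hq.dvd_iff_one_le_factorization hne, Nat.factorization_div (Nat.gcd_dvd_left a b),
    Nat.factorization_gcd ha hb]
  simp only [Finsupp.tsub_apply, Finsupp.inf_apply]
  omega

lemma exists_prime_mul_eq_pow {n m : ℕ} (hm : m ≠ 0) {P : Finset ℕ}
    (hPn : P ⊆ n.primeFactors) (hP : P.Nonempty) :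
    ∃ p ∈ P, ∃ i j g α β : ℕ, j ≠ 0 ∧ g * α = m ^ j ∧ g * β = n ^ i ∧ ¬ p ∣ α ∧
      (∀ q ∈ P, ¬ q ∣ β) ∧ ∀ q, q.Prime → q ∣ m → ¬ q ∣ n → q ∣ α := by
  obtain ⟨p, hpP, hpmin⟩ := P.exists_min_image
    (fun q ↦ (m.factorization q : ℚ) / n.factorization q) hP
  have hn : n ≠ 0 := (Nat.mem_primeFactors.1 (hPn hpP)).2.2
  have hprime {q : ℕ} (hq : q ∈ P) : q.Prime := Nat.prime_of_mem_primeFactors (hPn hq)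
  have hpos {q : ℕ} (hq : q ∈ P) : 0 < n.factorization q :=
    (hprime hq).factorization_pos_of_dvd hn (Nat.dvd_of_mem_primeFactors (hPn hq))
  set i := m.factorization p
  set j := n.factorization p
  have hα {q : ℕ} (hq : q.Prime) :
      q ∣ m ^ j / (m ^ j).gcd (n ^ i) ↔ i * n.factorization q < j * m.factorization q := by
    simpa using prime_dvd_div_gcd_iff (pow_ne_zero j hm) (pow_ne_zero i hn) hq
  have hβ {q : ℕ} (hq : q.Prime) :
      q ∣ n ^ i / (m ^ j).gcd (n ^ i) ↔ j * m.factorization q < i * n.factorization q := by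
    rw [Nat.gcd_comm]
    simpa using prime_dvd_div_gcd_iff (pow_ne_zero i hn) (pow_ne_zero j hm) hq
  refine ⟨p, hpP, i, j, (m ^ j).gcd (n ^ i), _, _, (hpos hpP).ne',
    Nat.mul_div_cancel' (Nat.gcd_dvd_left _ _), Nat.mul_div_cancel' (Nat.gcd_dvd_right _ _),
    ?_, fun q hq ↦ ?_, fun q hq hqm hqn ↦ ?_⟩
  · rw [hα (hprime hpP), mul_comm]
    exact lt_irrefl _
  · have hle := hpmin q hq
    rw [div_le_div_iff₀ (Nat.cast_pos.2 (hpos hpP)) (Nat.cast_pos.2 (hpos hq))] at hle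
    rw [hβ (hprime hq), not_lt, mul_comm j]
    exact_mod_cast hle
  · rw [hα hq, Nat.factorization_eq_zero_of_not_dvd hqn, mul_zero]
    exact Nat.mul_pos (hpos hpP) (hq.factorization_pos_of_dvd hm hqm)

lemma pow_ne_pow_of_irrational {n m : ℕ} (hm : 2 ≤ m)
    (hnm : Irrational (Real.log n / Real.log m)) (i : ℕ) {j : ℕ} (hj : j ≠ 0) :
    m ^ j ≠ n ^ i := by
  intro h
  have hlog : (j : ℝ) * Real.log m = i * Real.log n := by
    rw [← Real.log_pow, ← Real.log_pow]
    exact_mod_cast congrArg (fun k : ℕ ↦ Real.log k) h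
  have hlogm : Real.log m ≠ 0 := (Real.log_pos (by exact_mod_cast hm)).ne'
  have hi : (i : ℝ) ≠ 0 := by
    rintro hi
    rw [hi, zero_mul] at hlog
    exact mul_ne_zero (Nat.cast_ne_zero.2 hj) hlogm hlog
  refine hnm ⟨j / i, ?_⟩
  push_cast
  rw [div_eq_div_iff hi hlogm, hlog, mul_comm]

end Arithmetic

section Selection

variable {G : Type*} [AddCommGroup G] [MeasurableSpace G] [MeasurableAdd₂ G]

lemma map_timesMap_mul_pow_eq {ν : Measure G} {g α β : ℕ} (hα : ν.map (timesMap (g * α)) = ν)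
    (hβ : ν.map (timesMap (g * β)) = ν) (x E : ℕ) :
    ν.map (timesMap (x * α ^ E)) = ν.map (timesMap (x * β ^ E)) := by
  have hswap : (g * β) ^ E * (x * α ^ E) = (g * α) ^ E * (x * β ^ E) := by ring
  rw [← map_timesMap_mul_of_map_eq (map_timesMap_pow hβ E), hswap,
    map_timesMap_mul_of_map_eq (map_timesMap_pow hα E)]

variable {s : Finset ℕ} {μ : Measure UnitAddCircle} [IsProbabilityMeasure μ]
  {K Q g α β u w n n' : ℕ}

lemma collisionProb_map_pow_mul (hβs : β ∈ Nat.factoredNumbers s) (hβ : StablyInjective s μ β)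
    (hgβ : μ.map (timesMap (g * β)) = μ) (hg : g ∈ Nat.factoredNumbers s)
    (hK : K ∈ Nat.factoredNumbers s) (hu : u ∈ Nat.factoredNumbers s) (S : ℕ) :
    collisionProb K (μ.map (timesMap (g ^ S * u))) = collisionProb K (μ.map (timesMap u)) := by
  have hfactor : g ^ S * u * β ^ S = (g * β) ^ S * u := by ring
  rw [← (hβ.pow hβs S).collisionProb_map
    (Nat.ne_zero_of_mem_factoredNumbers (pow_mem_factoredNumbers hβs S)) hK
    (Nat.mul_mem_factoredNumbers (pow_mem_factoredNumbers hg S) hu),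
    hfactor, map_timesMap_mul_of_map_eq (map_timesMap_pow hgβ S)]

lemma exists_dvd_pow_mul_stablyInjective
    (hα : ∀ q, q.Prime → q ∈ s → q.Coprime Q → ¬ StablyInjective s μ q → q ∣ α)
    (hws : w ∈ Nat.factoredNumbers s) (hwQ : w.Coprime Q) :
    ∃ E d : ℕ, w ∣ α ^ E * d ∧ d ∈ Nat.factoredNumbers s ∧ StablyInjective s μ d ∧
      d.Coprime Q := by
  induction w using Nat.recOnMul with
  | zero => exact absurd rfl (Nat.ne_zero_of_mem_factoredNumbers hws)
  | one =>
    exact ⟨0, 1, by simp, one_mem_factoredNumbers s, .one, Nat.coprime_one_left Q⟩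
  | prime q hq =>
    by_cases hqμ : StablyInjective s μ q
    · exact ⟨0, q, by simp, hws, hqμ, hwQ⟩
    · have hqs : q ∈ s := (Nat.mem_factoredNumbers'.1 hws) q hq dvd_rfl
      exact ⟨1, 1, by simpa using hα q hq hqs hwQ hqμ, one_mem_factoredNumbers s, .one,
        Nat.coprime_one_left Q⟩
  | mul x y ihx ihy =>
    obtain ⟨E₁, d₁, hdvd₁, hs₁, hd₁, hQ₁⟩ :=
      ihx (Nat.mem_factoredNumbers_of_dvd hws (dvd_mul_right x y)) hwQ.coprime_mul_right
    obtain ⟨E₂, d₂, hdvd₂, hs₂, hd₂, hQ₂⟩ :=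
      ihy (Nat.mem_factoredNumbers_of_dvd hws (dvd_mul_left y x)) hwQ.coprime_mul_left
    refine ⟨E₁ + E₂, d₁ * d₂, ?_, Nat.mul_mem_factoredNumbers hs₁ hs₂,
      .mul hs₁ (Nat.ne_zero_of_mem_factoredNumbers hs₂) hd₁ hd₂, hQ₁.mul_left hQ₂⟩
    rw [pow_add, mul_mul_mul_comm]
    exact mul_dvd_mul hdvd₁ hdvd₂

lemma exists_not_essInjective_pow {p : ℕ} (hQs : Q ∈ Nat.factoredNumbers s) (hpQ : p ∣ Q)
    (hp : ¬ StablyInjective s μ p) :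
    ∃ u ∈ Nat.factoredNumbers s, u.Coprime Q ∧
      ∃ f, ¬ EssInjective (Q ^ (f + 1)) (μ.map (timesMap u)) := by
  simp only [StablyInjective, not_forall] at hp
  obtain ⟨v, hvs, hv⟩ := hp
  obtain ⟨u, w, f, rfl, huQ, hwQ⟩ :=
    exists_eq_mul_coprime_dvd_pow (Nat.ne_zero_of_mem_factoredNumbers hvs) Q
  refine ⟨u, Nat.mem_factoredNumbers_of_dvd hvs (dvd_mul_right u w), huQ, f, fun h ↦ hv ?_⟩
  obtain ⟨t, ht⟩ : w * p ∣ Q ^ (f + 1) := pow_succ Q f ▸ mul_dvd_mul hwQ hpQ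
  have hwpt : w * p * t ≠ 0 := ht ▸ pow_ne_zero _ (Nat.ne_zero_of_mem_factoredNumbers hQs)
  have hwp := left_ne_zero_of_mul hwpt
  rw [ht, essInjective_mul_iff hwp (right_ne_zero_of_mul hwpt),
    essInjective_mul_iff (left_ne_zero_of_mul hwp) (right_ne_zero_of_mul hwp),
    map_timesMap_timesMap] at h
  exact h.1.2

lemma collisionProb_map_pow_le (hα : ∀ q, q.Prime → q ∈ s → q.Coprime Q →
      ¬ StablyInjective s μ q → q ∣ α)
    (hgα : μ.map (timesMap (g * α)) = μ) (hgβ : μ.map (timesMap (g * β)) = μ)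
    (hn : μ.map (timesMap (Q * n')) = μ) (hns : Q * n' ∈ Nat.factoredNumbers s)
    (hβs : β ∈ Nat.factoredNumbers s) (hβ : StablyInjective s μ β) (hαQ : α.Coprime Q)
    (hn'Q : n'.Coprime Q) (hus : u ∈ Nat.factoredNumbers s) (huQ : u.Coprime Q) (k j : ℕ) :
    collisionProb (Q ^ k) (μ.map (timesMap ((Q ^ k) ^ j))) ≤
      collisionProb (Q ^ k) (μ.map (timesMap u)) := by
  have hn's := Nat.mem_factoredNumbers_of_dvd hns (dvd_mul_left n' Q)
  have hKs := pow_mem_factoredNumbers (Nat.mem_factoredNumbers_of_dvd hns (dvd_mul_right Q n')) k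
  have hK0 := Nat.ne_zero_of_mem_factoredNumbers hKs
  have hKjs := pow_mem_factoredNumbers hKs j
  obtain ⟨E, d, ⟨e, he⟩, hds, hd, hdQ⟩ := exists_dvd_pow_mul_stablyInjective hα
    (Nat.mul_mem_factoredNumbers (pow_mem_factoredNumbers hn's (k * j)) hus)
    ((hn'Q.pow_left _).mul_left huQ)
  have heQ : e.Coprime Q := .of_dvd_left (Dvd.intro_left _ he.symm) ((hαQ.pow_left E).mul_left hdQ)
  have hβE := pow_mem_factoredNumbers hβs E
  have hfactor : (Q ^ k) ^ j * d * α ^ E = (Q * n') ^ (k * j) * (u * e) := by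
    rw [mul_assoc, mul_comm d, he, ← pow_mul]
    ring
  calc collisionProb (Q ^ k) (μ.map (timesMap ((Q ^ k) ^ j)))
      = collisionProb (Q ^ k) (μ.map (timesMap ((Q ^ k) ^ j * d * β ^ E))) := by
        rw [(hβ.pow hβs E).collisionProb_map (Nat.ne_zero_of_mem_factoredNumbers hβE) hKs
          (Nat.mul_mem_factoredNumbers hKjs hds),
          hd.collisionProb_map (Nat.ne_zero_of_mem_factoredNumbers hds) hKs hKjs]
    _ = collisionProb (Q ^ k) ((μ.map (timesMap u)).map (timesMap e)) := by
        rw [← map_timesMap_mul_pow_eq hgα hgβ, hfactor,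
          map_timesMap_mul_of_map_eq (map_timesMap_pow hn _), map_timesMap_timesMap]
    _ ≤ collisionProb (Q ^ k) (μ.map (timesMap u)) :=
        collisionProb_map_timesMap_le hK0 (heQ.pow_right k)

lemma exists_collisionProb_pow_le {p : ℕ} (hα : ∀ q, q.Prime → q ∈ s → q.Coprime Q →
      ¬ StablyInjective s μ q → q ∣ α)
    (hgα : μ.map (timesMap (g * α)) = μ) (hgβ : μ.map (timesMap (g * β)) = μ)
    (hn : μ.map (timesMap (Q * n')) = μ) (hns : Q * n' ∈ Nat.factoredNumbers s)
    (hgs : g ∈ Nat.factoredNumbers s) (hβs : β ∈ Nat.factoredNumbers s)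
    (hβ : StablyInjective s μ β) (hαQ : α.Coprime Q) (hn'Q : n'.Coprime Q)
    (hpQ : p ∣ Q) (hp : ¬ StablyInjective s μ p) :
    ∃ f, ∃ c : ℝ, 0 < c ∧ c ≤ 1 ∧ ∀ S j,
      collisionProb (Q ^ (f + 1)) (μ.map (timesMap (g ^ S * (Q ^ (f + 1)) ^ j))) ≤
        ENNReal.ofReal (1 - c) := by
  have hQs := Nat.mem_factoredNumbers_of_dvd hns (dvd_mul_right Q n')
  obtain ⟨u, hus, huQ, f, hu⟩ := exists_not_essInjective_pow hQs hpQ hp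
  have hKs := pow_mem_factoredNumbers hQs (f + 1)
  have hlt := collisionProb_lt_one (Nat.ne_zero_of_mem_factoredNumbers hKs) hu
  refine ⟨f, 1 - (collisionProb (Q ^ (f + 1)) (μ.map (timesMap u))).toReal,
    sub_pos.2 (toReal_lt_of_lt_ofReal (by simpa using hlt)), sub_le_self _ toReal_nonneg,
    fun S j ↦ ?_⟩
  rw [_root_.sub_sub_cancel, ofReal_toReal (hlt.trans one_lt_top).ne,
    collisionProb_map_pow_mul hβs hβ hgβ hgs hKs (pow_mem_factoredNumbers hKs j)]
  exact collisionProb_map_pow_le hα hgα hgβ hn hns hβs hβ hαQ hn'Q hus huQ _ j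

lemma exists_prime_not_stablyInjective {m : ℕ} (hn : n ≠ 0) (hm : m ≠ 0)
    (h : ¬ EssInjective n μ) :
    ∃ p, p.Prime ∧ p ∣ n ∧ ¬ StablyInjective (n * m).primeFactors μ p ∧
      ∃ i j g α β : ℕ, j ≠ 0 ∧ g * α = m ^ j ∧ g * β = n ^ i ∧ ¬ p ∣ α ∧
        ∀ q ∈ (n * m).primeFactors, ¬ StablyInjective (n * m).primeFactors μ q →
          ¬ q ∣ β ∧ (¬ q ∣ n → q ∣ α) := by
  classical
  set s := (n * m).primeFactors
  set P := n.primeFactors.filter (¬ StablyInjective s μ ·)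
  have hmemP {q : ℕ} (hq : q.Prime) (hqn : q ∣ n) (hqμ : ¬ StablyInjective s μ q) : q ∈ P :=
    Finset.mem_filter.2 ⟨hq.mem_primeFactors hqn hn, hqμ⟩
  have hP : P.Nonempty := by
    rw [Finset.nonempty_iff_ne_empty]
    intro hempty
    have hns : n ∈ Nat.factoredNumbers s := Nat.mem_factoredNumbers_of_primeFactors_subset hn
      (Nat.primeFactors_mono (dvd_mul_right n m) (mul_ne_zero hn hm))
    refine h (StablyInjective.of_primes hns fun q hq hqn ↦ ?_).essInjective
    by_contra hqμ
    simpa [hempty] using hmemP hq hqn hqμ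
  obtain ⟨p, hpP, i, j, g, α, β, hj, hgα, hgβ, hpα, hβ, hα⟩ :=
    exists_prime_mul_eq_pow hm (Finset.filter_subset _ _) hP
  obtain ⟨hpn, hpμ⟩ := Finset.mem_filter.1 hpP
  refine ⟨p, Nat.prime_of_mem_primeFactors hpn, Nat.dvd_of_mem_primeFactors hpn, hpμ,
    i, j, g, α, β, hj, hgα, hgβ, hpα, fun q hqs hqμ ↦ ⟨fun hqβ ↦ ?_, fun hqn ↦ ?_⟩⟩
  · have hq := Nat.prime_of_mem_primeFactors hqs
    have hqn : q ∣ n := hq.dvd_of_dvd_pow (hqβ.trans (Dvd.intro_left g hgβ))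
    exact hβ q (hmemP hq hqn hqμ) hqβ
  · have hq := Nat.prime_of_mem_primeFactors hqs
    have hqm : q ∣ m := (hq.dvd_mul.1 (Nat.dvd_of_mem_primeFactors hqs)).resolve_left hqn
    exact hα q hq hqm hqn

lemma exists_collisionProb_le {m : ℕ} (hn : 2 ≤ n) (hm : 2 ≤ m)
    (hnm : Irrational (Real.log n / Real.log m)) (hμn : μ.map (timesMap n) = μ)
    (hμm : μ.map (timesMap m) = μ) (h : ¬ EssInjective n μ) :
    ∃ K g α β : ℕ, 2 ≤ K ∧ α.Coprime K ∧ β.Coprime K ∧ α ≠ β ∧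
      μ.map (timesMap (g * α)) = μ ∧ μ.map (timesMap (g * β)) = μ ∧
      ∃ c : ℝ, 0 < c ∧ c ≤ 1 ∧
        ∀ S j, collisionProb K (μ.map (timesMap (g ^ S * K ^ j))) ≤ ENNReal.ofReal (1 - c) := by
  have hn0 : n ≠ 0 := by omega
  have hm0 : m ≠ 0 := by omega
  obtain ⟨p, hp, hpn, hpμ, i, j, g, α, β, hj, hgα, hgβ, hpα, hαβ⟩ :=
    exists_prime_not_stablyInjective hn0 hm0 h
  set s := (n * m).primeFactors
  have hmem {a : ℕ} (ha : a ∣ n * m) : a ∈ Nat.factoredNumbers s :=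
    Nat.mem_factoredNumbers_of_dvd (Nat.mem_factoredNumbers_iff_primeFactors_subset.2
      ⟨mul_ne_zero hn0 hm0, subset_rfl⟩) ha
  have hpows := pow_mem_factoredNumbers (hmem (dvd_mul_right n m)) i
  have hgs := Nat.mem_factoredNumbers_of_dvd hpows (Dvd.intro β hgβ)
  have hβs := Nat.mem_factoredNumbers_of_dvd hpows (Dvd.intro_left g hgβ)
  have hβ : StablyInjective s μ β := .of_primes hβs fun q hq hqβ ↦ by
    by_contra hqμ
    exact (hαβ q ((Nat.mem_factoredNumbers'.1 hβs) q hq hqβ) hqμ).1 hqβ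
  have hps : p ∈ s := hp.mem_primeFactors (hpn.mul_right m) (mul_ne_zero hn0 hm0)
  obtain ⟨Q, n', k, rfl, hQ, hn'⟩ := exists_eq_mul_coprime_dvd_pow hn0 (α * β)
  have hdvd {q : ℕ} (hq : q.Prime) (hqn' : q ∣ n') : q ∣ α ∨ q ∣ β :=
    hq.dvd_mul.1 (hq.dvd_of_dvd_pow (hqn'.trans hn'))
  have hpQ : p ∣ Q := (hp.dvd_mul.1 hpn).resolve_right fun hpn' ↦
    (hdvd hp hpn').elim hpα (hαβ p hps hpμ).1
  have hαQ : α.Coprime Q := hQ.coprime_mul_right_right.symm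
  have hβQ : β.Coprime Q := hQ.coprime_mul_left_right.symm
  have hn'Q : n'.Coprime Q := .of_dvd_left hn' (hQ.symm.pow_left k)
  have hα (q : ℕ) (hq : q.Prime) (hqs : q ∈ s) (hqQ : q.Coprime Q)
      (hqμ : ¬ StablyInjective s μ q) : q ∣ α := by
    by_cases hqn : q ∣ Q * n'
    · exact (hdvd hq (hqQ.dvd_of_dvd_mul_left hqn)).resolve_right (hαβ q hqs hqμ).1
    · exact (hαβ q hqs hqμ).2 hqn
  have hμα : μ.map (timesMap (g * α)) = μ := hgα ▸ map_timesMap_pow hμm j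
  have hμβ : μ.map (timesMap (g * β)) = μ := hgβ ▸ map_timesMap_pow hμn i
  obtain ⟨f, hf⟩ := exists_collisionProb_pow_le hα hμα hμβ hμn (hmem (dvd_mul_right _ m)) hgs hβs
    hβ hαQ hn'Q hpQ hpμ
  refine ⟨Q ^ (f + 1), g, α, β, ?_, hαQ.pow_right _, hβQ.pow_right _, ?_, hμα, hμβ, hf⟩
  · have hQ0 : 0 < Q := Nat.pos_of_ne_zero (left_ne_zero_of_mul hn0)
    calc 2 ≤ p := hp.two_le
      _ ≤ Q := Nat.le_of_dvd hQ0 hpQ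
      _ ≤ Q ^ (f + 1) := Nat.le_self_pow f.succ_ne_zero Q
  · rintro rfl
    exact pow_ne_pow_of_irrational hm hnm i hj (hgα.symm.trans hgβ)

end Selection

section Fano

lemma negMulLog_le_of_le {a s q : ℝ} (ha : 0 ≤ a) (has : a ≤ s) (hq : 0 < q) :
    Real.negMulLog a ≤ -a * Real.log s - a * Real.log q + (s * q - a) := by
  rcases ha.eq_or_lt with rfl | ha
  · simpa using mul_nonneg has hq.le
  have hs : 0 < s := ha.trans_le has
  have hlog := Real.log_le_sub_one_of_pos (div_pos (mul_pos hs hq) ha)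
  rw [Real.log_div (mul_pos hs hq).ne' ha.ne', Real.log_mul hs.ne' hq.ne', le_sub_iff_add_le,
    le_div_iff₀ ha] at hlog
  rw [Real.negMulLog]
  linarith

variable {ι : Type*} {a : ι → ℝ}

lemma negMulLog_sum_le (s : Finset ι) (ha : ∀ i, 0 ≤ a i) :
    Real.negMulLog (∑ i ∈ s, a i) ≤ ∑ i ∈ s, Real.negMulLog (a i) := by
  have hterm (i : ι) (hi : i ∈ s) : -a i * Real.log (∑ i ∈ s, a i) ≤ Real.negMulLog (a i) := by
    rcases (ha i).eq_or_lt with h | h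
    · simp [← h]
    · exact mul_le_mul_of_nonpos_left
        (Real.log_le_log h (Finset.single_le_sum (fun j _ ↦ ha j) hi)) (neg_nonpos.2 h.le)
  calc Real.negMulLog (∑ i ∈ s, a i) = ∑ i ∈ s, -a i * Real.log (∑ i ∈ s, a i) := by
        rw [← Finset.sum_mul, Finset.sum_neg_distrib, Real.negMulLog]
    _ ≤ ∑ i ∈ s, Real.negMulLog (a i) := Finset.sum_le_sum hterm

variable [Fintype ι]

lemma sum_negMulLog_le_sub_sum_mul_log (ha : ∀ i, 0 ≤ a i) {q : ι → ℝ} (hq : ∀ i, 0 < q i)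
    (hq1 : ∑ i, q i ≤ 1) :
    ∑ i, Real.negMulLog (a i) ≤ Real.negMulLog (∑ i, a i) - ∑ i, a i * Real.log (q i) := by
  set s := ∑ i, a i
  have hs : 0 ≤ s := Finset.sum_nonneg fun i _ ↦ ha i
  have hle (i : ι) : a i ≤ s := Finset.single_le_sum (fun j _ ↦ ha j) (Finset.mem_univ i)
  calc ∑ i, Real.negMulLog (a i)
      ≤ ∑ i, (-a i * Real.log s - a i * Real.log (q i) + (s * q i - a i)) :=
        Finset.sum_le_sum fun i _ ↦ negMulLog_le_of_le (ha i) (hle i) (hq i)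
    _ = Real.negMulLog s - ∑ i, a i * Real.log (q i) + (s * ∑ i, q i - s) := by
        rw [Finset.sum_add_distrib, Finset.sum_sub_distrib, Finset.sum_sub_distrib,
          ← Finset.mul_sum, ← Finset.sum_mul, Finset.sum_neg_distrib, Real.negMulLog]
    _ ≤ Real.negMulLog s - ∑ i, a i * Real.log (q i) :=
        add_le_of_nonpos_right (sub_nonpos.2 (mul_le_of_le_one_right hs hq1))

lemma exists_guess_weights (j : ι) {ε : ℝ} (hε0 : 0 < ε) (hε1 : ε < 1) :
    ∃ q : ι → ℝ, (∀ i, 0 < q i) ∧ ∑ i, q i ≤ 1 ∧ q j = 1 - ε ∧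
      ∀ i ≠ j, q i = ε / (Fintype.card ι + 1) := by
  classical
  set N : ℝ := Fintype.card ι + 1
  have hN : 0 < N := by positivity
  set q : ι → ℝ := Function.update (fun _ ↦ ε / N) j (1 - ε)
  have hqj : q j = 1 - ε := Function.update_self ..
  have hqi (i : ι) (hi : i ≠ j) : q i = ε / N := Function.update_of_ne hi ..
  refine ⟨q, fun i ↦ ?_, ?_, hqj, hqi⟩
  · obtain rfl | hi := eq_or_ne i j
    · rw [hqj]
      exact sub_pos.2 hε1
    · rw [hqi i hi]
      positivity
  · have hrest : ∑ i ∈ Finset.univ.erase j, q i ≤ Fintype.card ι * (ε / N) := by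
      rw [Finset.sum_congr rfl fun i hi ↦ hqi i (Finset.ne_of_mem_erase hi), Finset.sum_const,
        nsmul_eq_mul]
      gcongr
      exact Finset.card_le_univ _
    have hcard : Fintype.card ι * (ε / N) ≤ ε := by
      rw [mul_div_left_comm]
      exact mul_le_of_le_one_right hε0.le ((div_le_one hN).2 (le_add_of_nonneg_right zero_le_one))
    rw [← Finset.add_sum_erase _ _ (Finset.mem_univ j), hqj]
    linarith

lemma sum_negMulLog_le_of_guess (ha : ∀ i, 0 ≤ a i) (j : ι) {ε : ℝ} (hε0 : 0 < ε) (hε1 : ε < 1) :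
    ∑ i, Real.negMulLog (a i) ≤ Real.negMulLog (∑ i, a i) - Real.log (1 - ε) * ∑ i, a i
      + (Real.log (Fintype.card ι + 1) - Real.log ε) * (∑ i, a i - a j) := by
  classical
  obtain ⟨q, hq, hq1, hqj, hqi⟩ := exists_guess_weights j hε0 hε1
  have hlog : ∑ i, a i * Real.log (q i) = a j * Real.log (1 - ε)
      + (∑ i, a i - a j) * (Real.log ε - Real.log (Fintype.card ι + 1)) := by
    rw [← Finset.add_sum_erase _ _ (Finset.mem_univ j), hqj, _root_.add_right_inj,
      ← Real.log_div hε0.ne' (by positivity), ← Finset.add_sum_erase _ a (Finset.mem_univ j),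
      add_sub_cancel_left, Finset.sum_mul]
    exact Finset.sum_congr rfl fun i hi ↦ by rw [hqi i (Finset.ne_of_mem_erase hi)]
  have hlog1 : Real.log (1 - ε) * ∑ i, a i ≤ Real.log (1 - ε) * a j :=
    mul_le_mul_of_nonpos_left (Finset.single_le_sum (fun i _ ↦ ha i) (Finset.mem_univ j))
      (Real.log_nonpos (sub_nonneg.2 hε1.le) (sub_le_self 1 hε0.le))
  linarith [sum_negMulLog_le_sub_sum_mul_log ha hq hq1]

end Fano

section ShannonEntropy

variable {α ι κ : Type*} [MeasurableSpace α] {μ : Measure α} [Fintype κ]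

/-- The Shannon entropy of a random variable with finitely many values. -/
noncomputable def shannonEntropy (μ : Measure α) (X : α → κ) : ℝ :=
  ∑ i, Real.negMulLog (μ.real (X ⁻¹' {i}))

lemma shannonEntropy_comp_of_map_eq [MeasurableSpace κ] [MeasurableSingletonClass κ] {T : α → α}
    (hT : Measurable T) (hμ : μ.map T = μ) {W : α → κ} (hW : Measurable W) :
    shannonEntropy μ (W ∘ T) = shannonEntropy μ W := by
  refine Finset.sum_congr rfl fun i _ ↦ ?_
  conv_rhs => rw [← hμ, map_measureReal_apply hT (hW (measurableSet_singleton i))]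
  rw [Set.preimage_comp]

variable [IsFiniteMeasure μ] [MeasurableSpace κ] [MeasurableSingletonClass κ] {W : α → κ}

lemma sum_measureReal_inter_preimage_singleton (hW : Measurable W) (S : Set α) :
    ∑ w, μ.real (S ∩ W ⁻¹' {w}) = μ.real S := by
  have hfiber (w : κ) : MeasurableSet (W ⁻¹' {w}) := hW (measurableSet_singleton w)
  have hsum := sum_measureReal_preimage_singleton (μ := μ.restrict S) Finset.univ
    (fun w _ ↦ hfiber w)
  simpa [measureReal_restrict_apply, hfiber, Set.inter_comm] using hsum

lemma shannonEntropy_comp_le [Fintype ι] (hW : Measurable W) (f : κ → ι) :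
    shannonEntropy μ (f ∘ W) ≤ shannonEntropy μ W := by
  classical
  have hfiber (i : ι) : μ.real (f ∘ W ⁻¹' {i}) = ∑ w with f w = i, μ.real (W ⁻¹' {w}) := by
    rw [sum_measureReal_preimage_singleton _ fun w _ ↦ hW (measurableSet_singleton w)]
    congr 1
    ext x
    simp
  rw [shannonEntropy, shannonEntropy, ← Finset.sum_fiberwise _ f]
  refine Finset.sum_le_sum fun i _ ↦ ?_
  rw [hfiber]
  exact negMulLog_sum_le _ fun w ↦ measureReal_nonneg

variable [MeasurableSpace ι] [MeasurableSingletonClass ι] {X : α → ι}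

lemma sum_measureReal_sub_eq (hX : Measurable X) (hW : Measurable W) (φ : κ → ι) :
    ∑ w, (μ.real (W ⁻¹' {w}) - μ.real (W ⁻¹' {w} ∩ X ⁻¹' {φ w})) =
      μ.real {x | X x ≠ φ (W x)} := by
  rw [← sum_measureReal_inter_preimage_singleton hW {x | X x ≠ φ (W x)}]
  refine Finset.sum_congr rfl fun w _ ↦ ?_
  have hdiff : {x | X x ≠ φ (W x)} ∩ W ⁻¹' {w} = W ⁻¹' {w} \ X ⁻¹' {φ w} := by
    ext x
    simp +contextual [and_comm]
  rw [hdiff, sub_eq_iff_eq_add, add_comm,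
    measureReal_inter_add_sdiff (hX (measurableSet_singleton (φ w)))]

/-- Fano's inequality, with the binary entropy of the error replaced by a cruder bound. -/
lemma shannonEntropy_prodMk_le [IsProbabilityMeasure μ] [Fintype ι] (hX : Measurable X)
    (hW : Measurable W) (φ : κ → ι) {ε : ℝ} (hε0 : 0 < ε) (hε1 : ε < 1) :
    shannonEntropy μ (fun x ↦ (X x, W x)) ≤ shannonEntropy μ W - Real.log (1 - ε)
      + (Real.log (Fintype.card ι + 1) - Real.log ε) * μ.real {x | X x ≠ φ (W x)} := by
  have hjoint (i : ι) (w : κ) :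
      (fun x ↦ (X x, W x)) ⁻¹' {(i, w)} = W ⁻¹' {w} ∩ X ⁻¹' {i} := by
    ext x
    simp [and_comm]
  have hguess (w : κ) := sum_negMulLog_le_of_guess
    (a := fun i ↦ μ.real (W ⁻¹' {w} ∩ X ⁻¹' {i})) (fun i ↦ measureReal_nonneg) (φ w) hε0 hε1
  simp only [sum_measureReal_inter_preimage_singleton hX] at hguess
  have htotal : ∑ w, μ.real (W ⁻¹' {w}) = 1 := by
    simpa using sum_measureReal_inter_preimage_singleton (μ := μ) hW Set.univ
  calc shannonEntropy μ (fun x ↦ (X x, W x))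
      = ∑ w, ∑ i, Real.negMulLog (μ.real (W ⁻¹' {w} ∩ X ⁻¹' {i})) := by
        rw [shannonEntropy, Fintype.sum_prod_type_right]
        simp only [hjoint]
    _ ≤ _ := Finset.sum_le_sum fun w _ ↦ hguess w
    _ = _ := by
        rw [Finset.sum_add_distrib, Finset.sum_sub_distrib, ← Finset.mul_sum, ← Finset.mul_sum,
          htotal, mul_one, sum_measureReal_sub_eq hX hW, shannonEntropy]

end ShannonEntropy

section Itinerary

variable {α ι : Type*} {T : α → α} {R : α → ι}

/-- The first `k` values of the observable `R` along the orbit of a point under `T`. -/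
def itinerary (T : α → α) (R : α → ι) (k : ℕ) (x : α) : Fin k → ι :=
  fun i ↦ R (T^[i] x)

lemma cons_itinerary (k : ℕ) (x : α) :
    Fin.cons (R x) (itinerary T R k (T x)) = itinerary T R (k + 1) x := by
  funext i
  refine Fin.cases ?_ (fun j ↦ ?_) i <;> simp [itinerary]

variable [MeasurableSpace α] [MeasurableSpace ι] {μ : Measure α}

lemma measurable_itinerary (hT : Measurable T) (hR : Measurable R) (k : ℕ) :
    Measurable (itinerary T R k) :=
  measurable_pi_lambda _ fun i ↦ hR.comp (hT.iterate i)

variable [MeasurableSingletonClass ι] [Fintype ι] [IsProbabilityMeasure μ]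

lemma shannonEntropy_itinerary_succ_le (hT : Measurable T) (hμ : μ.map T = μ) (hR : Measurable R)
    {k : ℕ} (φ : (Fin k → ι) → ι) {ε : ℝ} (hε0 : 0 < ε) (hε1 : ε < 1) :
    shannonEntropy μ (itinerary T R (k + 1)) ≤
      shannonEntropy μ (itinerary T R k) - Real.log (1 - ε)
        + (Real.log (Fintype.card ι + 1) - Real.log ε) *
          μ.real {x | R x ≠ φ (itinerary T R k (T x))} := by
  have hk := measurable_itinerary hT hR k
  have hcons : itinerary T R (k + 1) =
      (fun p : ι × (Fin k → ι) ↦ (Fin.cons p.1 p.2 : Fin (k + 1) → ι)) ∘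
        fun x ↦ (R x, itinerary T R k (T x)) :=
    funext fun x ↦ (cons_itinerary k x).symm
  rw [← shannonEntropy_comp_of_map_eq hT hμ hk, hcons]
  exact (shannonEntropy_comp_le (hR.prodMk (hk.comp hT)) _).trans
    (shannonEntropy_prodMk_le hR (hk.comp hT) φ hε0 hε1)

/-- The value of `R` at a point can be predicted, with arbitrarily small error probability, from
sufficiently many values of `R` along the orbit of its image under `T`. -/
def IsPredictable (μ : Measure α) (T : α → α) (R : α → ι) : Prop :=
  ∀ δ > 0, ∀ᶠ k in atTop, ∃ φ : (Fin k → ι) → ι,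
    μ.real {x | R x ≠ φ (itinerary T R k (T x))} ≤ δ

lemma exists_affine_bound_of_eventually_succ_le {u : ℕ → ℝ} {η : ℝ}
    (h : ∀ᶠ k in atTop, u (k + 1) ≤ u k + η) :
    ∃ r : ℕ, ∀ k, u (r + k) ≤ u r + k * η := by
  obtain ⟨r, hr⟩ := eventually_atTop.1 h
  refine ⟨r, fun k ↦ ?_⟩
  induction k with
  | zero => simp
  | succ k ih =>
    rw [← add_assoc]
    push_cast
    linarith [hr (r + k) (Nat.le_add_right r k)]

lemma IsPredictable.eventually_shannonEntropy_succ_le (hT : Measurable T) (hμ : μ.map T = μ)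
    (hR : Measurable R) (h : IsPredictable μ T R) {η : ℝ} (hη : 0 < η) :
    ∀ᶠ k in atTop, shannonEntropy μ (itinerary T R (k + 1)) ≤
      shannonEntropy μ (itinerary T R k) + η := by
  obtain ⟨ε, hε0, hε1, hε⟩ : ∃ ε : ℝ, 0 < ε ∧ ε < 1 ∧ -Real.log (1 - ε) = η / 2 :=
    ⟨1 - Real.exp (-(η / 2)), by simpa using hη, by simpa using Real.exp_pos _, by simp⟩
  set L := Real.log (Fintype.card ι + 1) - Real.log ε
  have hL : 0 < L := sub_pos.2 ((Real.log_neg hε0 hε1).trans_le (Real.log_nonneg (by simp)))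
  filter_upwards [h (η / 2 / L) (by positivity)] with k ⟨φ, hφ⟩
  have herror := (le_div_iff₀' hL).1 hφ
  linarith [shannonEntropy_itinerary_succ_le hT hμ hR φ hε0 hε1]

lemma IsPredictable.exists_shannonEntropy_le (hT : Measurable T) (hμ : μ.map T = μ)
    (hR : Measurable R) (h : IsPredictable μ T R) {η : ℝ} (hη : 0 < η) :
    ∃ k : ℕ, shannonEntropy μ (itinerary T R (k + 1)) ≤ (k + 1) * η := by
  obtain ⟨r, hr⟩ := exists_affine_bound_of_eventually_succ_le
    (u := fun k ↦ shannonEntropy μ (itinerary T R k))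
    (h.eventually_shannonEntropy_succ_le hT hμ hR (half_pos hη))
  obtain ⟨j, hj⟩ := exists_nat_ge (shannonEntropy μ (itinerary T R r) / (η / 2))
  rw [div_le_iff₀ (half_pos hη)] at hj
  refine ⟨r + j, (hr (j + 1)).trans ?_⟩
  push_cast
  nlinarith [(Nat.cast_nonneg r : (0 : ℝ) ≤ r)]

end Itinerary

section KSEntropy

variable {α : Type*} {T : α → α} {l : ℕ} {P : Fin l → Set α}

open Classical in
/-- The indicator of each of the sets `P i`, as a single random variable. -/
noncomputable def cellIndicator (P : Fin l → Set α) (x : α) : Fin l → Bool :=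
  fun i ↦ decide (x ∈ P i)

lemma refinedPartition_eq_preimage (hP : Pairwise (Function.onFun Disjoint P)) {k : ℕ}
    (f : Fin k → Fin l) :
    refinedPartition T P k f =
      itinerary T (cellIndicator P) k ⁻¹' {fun i j ↦ decide (j = f i)} := by
  ext x
  simp only [refinedPartition, Set.mem_iInter, Set.mem_preimage, Set.mem_singleton_iff,
    funext_iff, itinerary, cellIndicator, decide_eq_decide]
  refine forall_congr' fun i ↦ ⟨fun hx j ↦ ⟨fun hj ↦ ?_, fun hj ↦ hj ▸ hx⟩, fun h ↦ (h _).2 rfl⟩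
  by_contra hne
  exact Set.disjoint_left.1 (hP hne) hj hx

variable [MeasurableSpace α] {μ : Measure α}

lemma measurable_cellIndicator (hP : ∀ i, MeasurableSet (P i)) : Measurable (cellIndicator P) := by
  refine measurable_pi_lambda _ fun i ↦ measurable_to_bool ?_
  convert hP i using 1
  ext x
  simp [cellIndicator]

lemma sum_negMulLog_refinedPartition_le [IsProbabilityMeasure μ]
    (hP : Pairwise (Function.onFun Disjoint P)) (k : ℕ) :
    ∑ f, Real.negMulLog (μ (refinedPartition T P k f)).toReal ≤
      shannonEntropy μ (itinerary T (cellIndicator P) k) := by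
  have hinj : Function.Injective fun (f : Fin k → Fin l) i j ↦ decide (j = f i) := by
    intro f g hfg
    funext i
    simpa using congrFun (congrFun hfg i) (f i)
  simp only [refinedPartition_eq_preimage hP, ← measureReal_def]
  refine (Finset.sum_map Finset.univ ⟨_, hinj⟩ fun w ↦
    Real.negMulLog (μ.real (itinerary T (cellIndicator P) k ⁻¹' {w}))).symm.trans_le ?_
  exact Finset.sum_le_univ_sum_of_nonneg fun _ ↦
    Real.negMulLog_nonneg measureReal_nonneg measureReal_le_one

lemma ksEntropy_eq_zero_of_isPredictable [IsProbabilityMeasure μ] (hT : Measurable T)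
    (hμ : μ.map T = μ) {κ : Type*} [Finite κ] [MeasurableSpace κ] [MeasurableSingletonClass κ]
    {D : α → κ} (hD : Measurable D)
    (h : ∀ (l : ℕ) (X : α → Fin l → Bool), Measurable X → IsPredictable μ T fun x ↦ (X x, D x)) :
    ksEntropy T μ = 0 := by
  have := Fintype.ofFinite κ
  simp only [ksEntropy, iSup_eq_zero]
  rintro l P ⟨hPm, hPd, -⟩
  have hX := measurable_cellIndicator hPm
  refine le_antisymm (ENNReal.le_of_forall_pos_le_add fun η hη _ ↦ ?_) zero_le
  obtain ⟨k, hk⟩ := (h l _ hX).exists_shannonEntropy_le hT hμ (hX.prodMk hD) (η := η) hη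
  have hle : ∑ f, Real.negMulLog (μ (refinedPartition T P (k + 1) f)).toReal ≤ (k + 1) * η :=
    calc ∑ f, Real.negMulLog (μ (refinedPartition T P (k + 1) f)).toReal
        ≤ shannonEntropy μ (itinerary T (cellIndicator P) (k + 1)) :=
          sum_negMulLog_refinedPartition_le hPd (k + 1)
      _ ≤ shannonEntropy μ (itinerary T (fun x ↦ (cellIndicator P x, D x)) (k + 1)) :=
          shannonEntropy_comp_le (measurable_itinerary hT (hX.prodMk hD) (k + 1))
            fun w i ↦ (w i).1
      _ ≤ (k + 1) * η := hk
  rw [zero_add]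
  refine (iInf_le _ k).trans (ENNReal.div_le_of_le_mul' ?_)
  calc finPartitionEntropy μ (refinedPartition T P (k + 1)) ≤ ENNReal.ofReal ((k + 1) * η) :=
        ENNReal.ofReal_le_ofReal hle
    _ = (k + 1 : ℝ≥0∞) * η := by
        rw [ENNReal.ofReal_mul (by positivity), ENNReal.ofReal_coe_nnreal]
        norm_cast

end KSEntropy

section Prediction

variable {α ι : Type*}

lemma exists_decoder [Nonempty ι] {κ : Type*} {f : α → κ} {K : ι → Set α}
    (h : ∀ a a', a ≠ a' → ∀ x ∈ K a, ∀ y ∈ K a', f x ≠ f y) :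
    ∃ φ : κ → ι, ∀ a, ∀ x ∈ K a, φ (f x) = a := by
  have hfactors : Function.FactorsThrough Sigma.fst (fun p : Σ a, K a ↦ f p.2) := fun p p' hf ↦ by
    by_contra hne
    exact h _ _ hne _ p.2.2 _ p'.2.2 hf
  exact ⟨Function.extend _ Sigma.fst fun _ ↦ Classical.arbitrary ι,
    fun a x hx ↦ hfactors.extend_apply _ ⟨a, x, hx⟩⟩

variable [Finite ι]

lemma eventually_forall_lt_dist [MetricSpace α] {K : ι → Set α} (hK : ∀ a, IsCompact (K a))
    (hdisj : Pairwise (Function.onFun Disjoint K)) {b : ℕ → ℝ}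
    (hb : Tendsto b atTop (𝓝 0)) :
    ∀ᶠ k in atTop, ∀ a a', a ≠ a' → ∀ x ∈ K a, ∀ y ∈ K a', b k < dist x y := by
  simp only [eventually_all]
  intro a a' ha
  obtain ⟨ρ, hρ, hdist⟩ :=
    Metric.exists_pos_forall_lt_edist (hK a) (hK a').isClosed (hdisj ha)
  filter_upwards [hb.eventually_lt_const (NNReal.coe_pos.2 hρ)] with k hk x hx y hy
  refine hk.trans ?_
  have h := hdist x hx y hy
  rwa [edist_nndist, coe_lt_coe, ← NNReal.coe_lt_coe, coe_nndist] at h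

variable [MeasurableSpace α] {μ : Measure α}

lemma exists_isCompact_subset_measure_iUnion_le [IsFiniteMeasure μ] [TopologicalSpace α]
    [PolishSpace α] [BorelSpace α] {E : ι → Set α} (hE : ∀ a, MeasurableSet (E a)) {δ : ℝ≥0∞}
    (hδ : δ ≠ 0) :
    ∃ K : ι → Set α, (∀ a, K a ⊆ E a) ∧ (∀ a, IsCompact (K a)) ∧ μ (⋃ a, E a \ K a) ≤ δ := by
  obtain ⟨δ', hδ'0, hδ'⟩ := ENNReal.exists_pos_sum_of_countable' hδ ι
  choose K hKE hK hμK using fun a ↦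
    (hE a).exists_isCompact_sdiff_lt (measure_ne_top μ _) (hδ'0 a).ne'
  refine ⟨K, hKE, hK, (measure_iUnion_le _).trans (le_trans ?_ hδ'.le)⟩
  exact ENNReal.tsum_le_tsum fun a ↦ (hμK a).le

/-- The sets `T '' (X ∩ R ⁻¹' {a})` are disjoint, hence up to a small error compact and at positive
distance from each other, so that a long itinerary of `T x` determines which one contains `T x`. -/
lemma isPredictable_of_injOn [IsProbabilityMeasure μ] [MetricSpace α] [PolishSpace α]
    [BorelSpace α] [MeasurableSpace ι] [MeasurableSingletonClass ι] {T : α → α} (hT : Continuous T)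
    (hμ : μ.map T = μ) {X : Set α} (hX : MeasurableSet X) (hX0 : μ Xᶜ = 0) (hinj : X.InjOn T)
    {R : α → ι} (hR : Measurable R) {b : ℕ → ℝ} (hb : Tendsto b atTop (𝓝 0))
    (hRb : ∀ k x y, itinerary T R k x = itinerary T R k y → dist x y ≤ b k) :
    IsPredictable μ T R := by
  intro δ hδ
  have : Nonempty ι := μ.nonempty_of_neZero.map R
  set E : ι → Set α := fun a ↦ T '' (X ∩ R ⁻¹' {a})
  have hE (a : ι) : MeasurableSet (E a) :=
    (hX.inter (hR (measurableSet_singleton a))).image_of_continuousOn_injOn hT.continuousOn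
      (hinj.mono Set.inter_subset_left)
  have hEdisj : Pairwise (Function.onFun Disjoint E) := by
    intro a a' ha
    refine Set.disjoint_left.2 ?_
    rintro _ ⟨x, ⟨hx, rfl⟩, rfl⟩ ⟨y, ⟨hy, rfl⟩, hxy⟩
    exact ha (congrArg R (hinj hx hy hxy.symm))
  obtain ⟨K, hKE, hK, hμK⟩ :=
    exists_isCompact_subset_measure_iUnion_le (μ := μ) hE (ofReal_pos.2 hδ).ne'
  filter_upwards [eventually_forall_lt_dist hK (hEdisj.mono fun a a' h ↦ h.mono (hKE a) (hKE a'))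
    hb] with k hk
  obtain ⟨φ, hφ⟩ := exists_decoder fun a a' ha x hx y hy h ↦
    (hk a a' ha x hx y hy).not_ge (hRb k x y h)
  have hsubset : {x | R x ≠ φ (itinerary T R k (T x))} ⊆ Xᶜ ∪ T ⁻¹' ⋃ a, E a \ K a := by
    intro x hx
    by_contra hcon
    simp only [Set.mem_union, Set.mem_compl_iff, not_or, not_not, Set.mem_preimage,
      Set.mem_iUnion, not_exists, Set.mem_sdiff, not_and] at hcon
    exact hx (hφ _ _ (hcon.2 (R x) ⟨x, ⟨hcon.1, rfl⟩, rfl⟩)).symm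
  refine ⟨φ, toReal_le_of_le_ofReal hδ.le ?_⟩
  have hmeas : MeasurableSet (⋃ a, E a \ K a) :=
    .iUnion fun a ↦ (hE a).diff (hK a).measurableSet
  calc μ {x | R x ≠ φ (itinerary T R k (T x))} ≤ μ (Xᶜ ∪ T ⁻¹' ⋃ a, E a \ K a) :=
        measure_mono hsubset
    _ ≤ μ Xᶜ + μ (T ⁻¹' ⋃ a, E a \ K a) := measure_union_le _ _
    _ = μ (⋃ a, E a \ K a) := by
        rw [hX0, zero_add, ← Measure.map_apply hT.measurable hmeas, hμ]
    _ ≤ ENNReal.ofReal δ := hμK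

end Prediction

section ZeroEntropy

variable {n : ℕ} {ν : Measure UnitAddCircle}

lemma torsionSum_apply (n : ℕ) {s : Set UnitAddCircle} (hs : MeasurableSet s) :
    torsionSum n ν s = ∑ j ∈ Finset.range n, ν ((· + j • unitFrac n) ⁻¹' s) := by
  rw [torsionSum, translateSum, Measure.finsetSum_apply]
  exact Finset.sum_congr rfl fun j _ ↦ Measure.map_apply (measurable_add_const _) hs

variable [IsFiniteMeasure ν]

lemma torsionSum_setOf_fiberProb_eq_one (hn : n ≠ 0) :
    torsionSum n ν {x | fiberProb n ν x = 1} = ν {x | fiberProb n ν x = 1} := by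
  have hmeas : MeasurableSet {x | fiberProb n ν x = 1} :=
    measurableSet_eq_fun (measurable_fiberProb n ν) measurable_const
  calc torsionSum n ν {x | fiberProb n ν x = 1}
      = ∫⁻ x in {x | fiberProb n ν x = 1}, fiberProb n ν x ∂torsionSum n ν := by
        rw [setLIntegral_congr_fun hmeas (g := fun _ ↦ 1) fun x hx ↦ hx, setLIntegral_one]
    _ = ν {x | fiberProb n ν x = 1} := by
        rw [← withDensity_apply _ hmeas, withDensity_fiberProb hn]

lemma measure_preimage_add_nsmul_unitFrac_eq_zero {j : ℕ} (hjn : j < n) (hj : j ≠ 0) :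
    ν ((· + j • unitFrac n) ⁻¹' {x | fiberProb n ν x = 1}) = 0 := by
  have hn : n ≠ 0 := Nat.ne_zero_of_lt hjn
  have hsum := torsionSum_setOf_fiberProb_eq_one (ν := ν) hn
  rw [torsionSum_apply n (measurableSet_eq_fun (measurable_fiberProb n ν) measurable_const),
    ← Finset.add_sum_erase _ _ (Finset.mem_range.2 (Nat.pos_of_ne_zero hn))] at hsum
  simp only [zero_smul, add_zero, Set.preimage_id'] at hsum
  have hzero := (ENNReal.add_right_inj (measure_ne_top ν _)).1 (hsum.trans (add_zero _).symm)
  exact Finset.sum_eq_zero_iff.1 hzero j (Finset.mem_erase.2 ⟨hj, Finset.mem_range.2 hjn⟩)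

lemma EssInjective.exists_injOn (hn : n ≠ 0) (h : EssInjective n ν) :
    ∃ X, MeasurableSet X ∧ ν Xᶜ = 0 ∧ X.InjOn (timesMap n) := by
  set A : Set UnitAddCircle := {x | fiberProb n ν x = 1}
  have hA : MeasurableSet A := measurableSet_eq_fun (measurable_fiberProb n ν) measurable_const
  refine ⟨A \ ⋃ j ∈ (Finset.range n).erase 0, (· + j • unitFrac n) ⁻¹' A,
    hA.diff (Finset.measurableSet_biUnion _ fun j _ ↦ measurable_add_const _ hA), ?_, ?_⟩
  · rw [Set.sdiff_eq, Set.compl_inter, compl_compl]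
    refine measure_union_null h ?_
    refine (measure_biUnion_null_iff (Finset.countable_toSet _)).2 fun j hj ↦ ?_
    have hj' := Finset.mem_erase.1 hj
    exact measure_preimage_add_nsmul_unitFrac_eq_zero (Finset.mem_range.1 hj'.2) hj'.1
  · rintro x ⟨hx, -⟩ y ⟨-, hy⟩ hxy
    obtain ⟨j, hjn, rfl⟩ := exists_eq_add_nsmul_unitFrac hn hxy
    obtain rfl | hj := eq_or_ne j 0
    · rw [zero_smul, add_zero]
    · exact absurd (Set.mem_biUnion (Finset.mem_erase.2 ⟨hj, Finset.mem_range.2 hjn⟩) hx) hy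

end ZeroEntropy

section Digits

variable {n : ℕ} {x y : UnitAddCircle}

lemma fracPart_nonneg (x : UnitAddCircle) : 0 ≤ fracPart x := (AddCircle.equivIco 1 0 x).2.1

lemma fracPart_lt_one (x : UnitAddCircle) : fracPart x < 1 :=
  (AddCircle.equivIco 1 0 x).2.2.trans_eq (zero_add 1)

lemma fracPart_nsmul (n : ℕ) (x : UnitAddCircle) :
    fracPart (n • x) = Int.fract (n * fracPart x) := by
  conv_lhs => rw [← coe_fracPart x, ← AddCircle.coe_nsmul, nsmul_eq_mul]
  rw [fracPart, AddCircle.coe_equivIco_mk_apply, div_one, mul_one]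

/-- The first base-`n` digit of a point of the circle.  It is less than `n` if `n ≠ 0`; the type
`Fin (n + 1)` avoids that hypothesis. -/
noncomputable def digit (n : ℕ) (x : UnitAddCircle) : Fin (n + 1) :=
  Fin.ofNat (n + 1) ⌊n * fracPart x⌋₊

lemma measurable_digit (n : ℕ) : Measurable (digit n) :=
  (measurable_from_top (f := Fin.ofNat (n + 1))).comp
    (Nat.measurable_floor.comp (measurable_fracPart.const_mul _))

lemma mul_fracPart (n : ℕ) (x : UnitAddCircle) :
    n * fracPart x = (digit n x : ℕ) + fracPart (n • x) := by
  have hnonneg : 0 ≤ n * fracPart x := mul_nonneg (Nat.cast_nonneg n) (fracPart_nonneg x)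
  have hle : n * fracPart x ≤ n :=
    mul_le_of_le_one_right (Nat.cast_nonneg n) (fracPart_lt_one x).le
  have hdigit : (digit n x : ℕ) = ⌊n * fracPart x⌋₊ :=
    Nat.mod_eq_of_lt (Nat.lt_succ_of_le (Nat.floor_le_of_le hle))
  rw [hdigit, fracPart_nsmul, natCast_floor_eq_intCast_floor hnonneg, Int.floor_add_fract]

lemma mul_abs_fracPart_sub (h : digit n x = digit n y) :
    n * |fracPart x - fracPart y| = |fracPart (n • x) - fracPart (n • y)| := by
  rw [← Nat.abs_cast n, ← abs_mul, mul_sub, mul_fracPart, mul_fracPart, h, add_sub_add_left_eq_sub]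

lemma abs_fracPart_sub_le (hn : 2 ≤ n) {r : ℕ}
    (h : ∀ i < r, digit n ((timesMap n)^[i] x) = digit n ((timesMap n)^[i] y)) :
    |fracPart x - fracPart y| ≤ (1 / 2) ^ r := by
  induction r generalizing x y with
  | zero =>
    rw [pow_zero, abs_sub_le_iff]
    constructor <;> linarith [fracPart_nonneg x, fracPart_nonneg y, fracPart_lt_one x,
      fracPart_lt_one y]
  | succ r ih =>
    have htail := ih (x := n • x) (y := n • y) fun i hi ↦ h (i + 1) (Nat.succ_lt_succ hi)
    have hhead : digit n x = digit n y := h 0 r.succ_pos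
    rw [← mul_abs_fracPart_sub hhead] at htail
    have htwo : 2 * |fracPart x - fracPart y| ≤ n * |fracPart x - fracPart y| :=
      mul_le_mul_of_nonneg_right (by exact_mod_cast hn) (abs_nonneg _)
    rw [pow_succ]
    linarith

lemma dist_le_abs_fracPart_sub (x y : UnitAddCircle) : dist x y ≤ |fracPart x - fracPart y| := by
  conv_lhs => rw [dist_eq_norm, ← coe_fracPart x, ← coe_fracPart y, ← AddCircle.coe_sub]
  exact QuotientAddGroup.norm_mk_le_norm

theorem ksEntropy_eq_zero_of_essInjective {μ : Measure UnitAddCircle} [IsProbabilityMeasure μ]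
    (hn : 2 ≤ n) (hμ : μ.map (timesMap n) = μ) (h : EssInjective n μ) :
    ksEntropy (timesMap n) μ = 0 := by
  obtain ⟨X, hX, hX0, hinj⟩ := h.exists_injOn (Nat.ne_zero_of_lt hn)
  refine ksEntropy_eq_zero_of_isPredictable (measurable_timesMap n) hμ (measurable_digit n)
    fun l Y hY ↦ ?_
  refine isPredictable_of_injOn (continuous_nsmul n) hμ hX hX0 hinj
    (hY.prodMk (measurable_digit n)) (b := fun k ↦ (1 / 2) ^ k)
    (tendsto_pow_atTop_nhds_zero_of_lt_one (by norm_num) (by norm_num)) fun k x y hxy ↦ ?_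
  exact (dist_le_abs_fracPart_sub x y).trans
    (abs_fracPart_sub_le hn fun i hi ↦ congrArg Prod.snd (congrFun hxy ⟨i, hi⟩))

end Digits

end RudolphJohnson

/-- Rudolph–Johnson: Let `n` and `m` be multiplicatively independent
integers, each at least 2, and let `μ` be a Borel probability measure on `𝕋` invariant
and ergodic under the multiplicative semigroup generated by `×n` and `×m`.  If
`h_μ(×n) > 0` then `μ` is Lebesgue measure on `𝕋`. -/
theorem rudolph_johnson_times_n_times_m_positive_entropy
    (n m : ℕ) (hn : 2 ≤ n) (hm : 2 ≤ m)
    (hindep : Irrational (Real.log n / Real.log m))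
    (μ : Measure UnitAddCircle) [IsProbabilityMeasure μ]
    (hinvn : Measure.map (fun x : UnitAddCircle => n • x) μ = μ)
    (hinvm : Measure.map (fun x : UnitAddCircle => m • x) μ = μ)
    (herg : ∀ A : Set UnitAddCircle, MeasurableSet A →
      (fun x : UnitAddCircle => n • x) ⁻¹' A = A →
      (fun x : UnitAddCircle => m • x) ⁻¹' A = A → μ A = 0 ∨ μ A = 1)
    (hent : 0 < ksEntropy (fun x : UnitAddCircle => n • x) μ) :
    μ = volume := by
  have hinj : ¬ RudolphJohnson.EssInjective n μ := fun h ↦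
    hent.ne' (RudolphJohnson.ksEntropy_eq_zero_of_essInjective hn hinvn h)
  obtain ⟨K, g, α, β, hK, hα, hβ, hαβ, hμα, hμβ, c, hc0, hc1, hcollision⟩ :=
    RudolphJohnson.exists_collisionProb_le hn hm hindep hinvn hinvm hinj
  obtain ⟨ρ, hρμ, hρc, hρ⟩ := RudolphJohnson.exists_seq_le_tendsto_integral_fourier
    hK hα hβ hαβ hμα hμβ hc0 hc1 hcollision
  have hvolume : ENNReal.ofReal (c / 2) • volume ≤ μ :=
    RudolphJohnson.smul_volume_le_of_tendsto hρμ (half_pos hc0).le hρc hρ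
  exact RudolphJohnson.eq_volume_of_smul_volume_le hn hm hinvn hinvm herg
    (ofReal_pos.2 (half_pos hc0)).ne' hvolume
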